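/- arXiv:1112.0165 — 2 statements merged into one kernel-verified Lean document; each statement's English description precedes it below -/
import Mathlib

section
/- In the mapping class group MCG(S_{n+1}) of the (n+1)-times punctured sphere, with σ̂_i the images of the Artin generators of B_n and ρ the clockwise rotation by 2π/(n+1), the following relations hold for 1 ≤ i ≤ n−1 and 0 ≤ j ≤ n: (1) σ̂_i ρ^j = ρ^j σ̂_{i−j (mod n+1)} whenever i − j ≢ 0 and i − j ≢ n (mod n+1); (2) σ̂_i ρ^i = ρ^{i+1} (σ̂_1 ⋯ σ̂_{n−1})^{-1}; (3) σ̂_i ρ^{i+1} = ρ^i (σ̂_{n−1} ⋯ σ̂_1)^{-1}. -/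
/-!
Write `m = n + 1`. The braid relations alone give `ρ σ̂_k = σ̂_{k+1} ρ` for `1 ≤ k < m - 1`, so
`ρ^j` carries `σ̂_k` to `σ̂_{k+j}` as long as the indices stay in range. Since `ρ^m = 1`, inverting
these relations lets the index wrap around modulo `m`; this is relation (1), valid for all of
`σ̂_1, …, σ̂_{m-1}`. In particular `σ̂_i ρ^{i+1} = ρ^{i+1} σ̂_{m-1}`, as `i ≡ (i + 1) + (m - 1)`.
Relations (2) and (3) are this identity with `σ̂_{m-1}` eliminated by means of
`ρ = (σ̂_1 ⋯ σ̂_{m-2}) σ̂_{m-1}` and `ρ σ̂_{m-1} (σ̂_{m-2} ⋯ σ̂_1) = 1` respectively.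
-/

namespace Braids

/-- The braid relations on `n` strands (Artin generators `σ_i`, `i : Fin (n-1)`):
`σ_i σ_j σ_i = σ_j σ_i σ_j` for `|i-j| = 1` and `σ_i σ_j = σ_j σ_i` for `|i-j| ≥ 2`. -/
def braidRels (n : ℕ) : Set (FreeGroup (Fin (n - 1))) :=
  {r | (∃ i j : Fin (n - 1), (i : ℕ) + 1 = (j : ℕ) ∧
          r = .of i * .of j * .of i * (.of j * .of i * .of j)⁻¹) ∨
       (∃ i j : Fin (n - 1), (i : ℕ) + 2 ≤ (j : ℕ) ∧
          r = .of i * .of j * (.of j * .of i)⁻¹)}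

/-- The braid group on `n` strands. -/
abbrev Braid (n : ℕ) := PresentedGroup (braidRels n)

/-- The Artin generator `σ_i` of the braid group on `n` strands. -/
def σ {n : ℕ} (i : Fin (n - 1)) : Braid n := PresentedGroup.of i

/-- The Artin generator, with out-of-range indices mapped to `1`. -/
def σ' (n : ℕ) (i : ℕ) : Braid n := if h : i < n - 1 then σ ⟨i, h⟩ else 1

/-- The monoid of positive braids. -/
def Pos (n : ℕ) : Submonoid (Braid n) := Submonoid.closure (Set.range (σ (n := n)))

/-- The prefix order: `x ≼ y` iff `x⁻¹ * y` is a positive braid. -/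
def PrefixLE {n : ℕ} (x y : Braid n) : Prop := x⁻¹ * y ∈ Pos n

/-- The Garside half-twist `Δ = σ₁(σ₂σ₁)(σ₃σ₂σ₁)⋯(σ_{n-1}⋯σ₁)` (0-based indices). -/
def Δ (n : ℕ) : Braid n :=
  ((((List.range (n - 1)).map fun k => (List.range (k + 1)).reverse).flatten).map (σ' n)).prod

/-- A braid is simple (a positive permutation braid) if it is a positive prefix of `Δ`. -/
def IsSimple {n : ℕ} (s : Braid n) : Prop := s ∈ Pos n ∧ PrefixLE s (Δ n)

/-- A letter of the alphabet consisting of simple elements and their inverses. -/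
def SimpleOrInv {n : ℕ} (a : Braid n) : Prop := IsSimple a ∨ IsSimple a⁻¹

/-- `len x` is `|x|`: the minimal length of a word representing `x` whose letters are
simple elements and their inverses. -/
noncomputable def len {n : ℕ} (x : Braid n) : ℕ :=
  sInf {k | ∃ l : List (Braid n), (∀ a ∈ l, SimpleOrInv a) ∧ l.prod = x ∧ l.length = k}

/-! ### The mapping class group of the punctured sphere -/

/-- The free-group generator of index `k` (1-based out of `m-1` generators; out-of-range
indices map to `1`). -/
def fgen (m : ℕ) (k : ℕ) : FreeGroup (Fin (m - 1)) := if h : k < m - 1 then .of ⟨k, h⟩ else 1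

/-- The word `σ₁ σ₂ ⋯ σ_{m-1}`. -/
def fullRow (m : ℕ) : FreeGroup (Fin (m - 1)) := ((List.range (m - 1)).map (fgen m)).prod

/-- The word `σ_{m-1} ⋯ σ₂ σ₁`. -/
def fullRowRev (m : ℕ) : FreeGroup (Fin (m - 1)) :=
  ((List.range (m - 1)).reverse.map (fgen m)).prod

/-- Relations of the mapping class group of the `m`-times punctured sphere (Birman):
the braid relations together with `σ₁⋯σ_{m-1}σ_{m-1}⋯σ₁ = 1` and `(σ₁⋯σ_{m-1})^m = 1`. -/
def sphereRels (m : ℕ) : Set (FreeGroup (Fin (m - 1))) :=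
  braidRels m ∪ {fullRow m * fullRowRev m, fullRow m ^ m}

/-- The mapping class group `MCG(S_m)` of the `m`-times punctured sphere. -/
abbrev SphereMCG (m : ℕ) := PresentedGroup (sphereRels m)

/-- The half-twist generator `σ̂_k` of `MCG(S_m)`, `1 ≤ k ≤ m-1` (1-based; out-of-range
indices map to `1`). -/
def shat (m : ℕ) (k : ℕ) : SphereMCG m :=
  if h : 1 ≤ k ∧ k ≤ m - 1 then PresentedGroup.of ⟨k - 1, by omega⟩ else 1

/-- The rotation `ρ` of the `m`-times punctured sphere by the angle `2π/m`, which permutes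
the `m` punctures cyclically; it equals `σ̂₁ σ̂₂ ⋯ σ̂_{m-1}`. -/
def ρSph (m : ℕ) : SphereMCG m := PresentedGroup.mk (sphereRels m) (fullRow m)

/-- The inclusion of generator indices of `B_n` into those of `MCG(S_{n+1})`. -/
def embIdx (n : ℕ) (i : Fin (n - 1)) : Fin (n + 1 - 1) := ⟨i.1, by have := i.2; omega⟩

/-- The canonical homomorphism `B_n → MCG(S_{n+1})`, sending the Artin generator `σ_i` to the
half-twist `σ̂_i`; it is obtained by collapsing the boundary of the `n`-times punctured disk
to the `(n+1)`-st puncture of the sphere.  Its kernel is `⟨Δ²⟩`, so it identifies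
`B_n/⟨Δ²⟩` with the subgroup of `MCG(S_{n+1})` of classes fixing the `(n+1)`-st puncture. -/
def brToSph (n : ℕ) : Braid n →* SphereMCG (n + 1) :=
  PresentedGroup.toGroup
    (f := fun i => (PresentedGroup.of (embIdx n i) : SphereMCG (n + 1)))
    (by
      have key : ∀ r ∈ sphereRels (n + 1), PresentedGroup.mk (sphereRels (n + 1)) r = 1 :=
        fun r hr => (QuotientGroup.eq_one_iff r).2 (Subgroup.subset_normalClosure hr)
      have hcomp :
          FreeGroup.lift (fun i => (PresentedGroup.of (embIdx n i) : SphereMCG (n + 1))) =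
            (PresentedGroup.mk (sphereRels (n + 1))).comp (FreeGroup.map (embIdx n)) := by
        apply FreeGroup.ext_hom
        intro a
        simp [PresentedGroup.of]
      intro r hr
      rw [hcomp, MonoidHom.comp_apply]
      rcases hr with ⟨i, j, hij, rfl⟩ | ⟨i, j, hij, rfl⟩
      · have hmap : (FreeGroup.map (embIdx n))
            (.of i * .of j * .of i * (.of j * .of i * .of j)⁻¹) =
            (.of (embIdx n i) * .of (embIdx n j) * .of (embIdx n i) *
              (.of (embIdx n j) * .of (embIdx n i) * .of (embIdx n j))⁻¹) := by
          simp
        rw [hmap]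
        exact key _ (Set.mem_union_left _
          (Or.inl ⟨embIdx n i, embIdx n j, by simpa [embIdx] using hij, rfl⟩))
      · have hmap : (FreeGroup.map (embIdx n))
            (.of i * .of j * (.of j * .of i)⁻¹) =
            (.of (embIdx n i) * .of (embIdx n j) *
              (.of (embIdx n j) * .of (embIdx n i))⁻¹) := by
          simp
        rw [hmap]
        exact key _ (Set.mem_union_left _
          (Or.inr ⟨embIdx n i, embIdx n j, by simpa [embIdx] using hij, rfl⟩)))

theorem modEq_add_sub_mod {i j m : ℕ} (h : j ≤ i + m) : i ≡ j + (i + m - j) % m [MOD m] := by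
  simp [Nat.ModEq, Nat.add_sub_cancel' h]

section BraidSequence

variable {M : Type*} [Monoid M] {G : Type*} [Group G]

/-- The braid relations on `n + 1` strands for the terms `s 0, …, s (n - 1)` of a sequence in a
monoid. The indices are bounded natural numbers rather than elements of `Fin n`, so that products
over initial segments are products over `List.range`. -/
structure IsBraidSequence (s : ℕ → M) (n : ℕ) : Prop where
  braid : ∀ i, i + 1 < n → s i * s (i + 1) * s i = s (i + 1) * s i * s (i + 1)
  commute : ∀ i j, i + 2 ≤ j → j < n → Commute (s i) (s j)

theorem IsBraidSequence.semiconjBy_prod_range {s : ℕ → M} {n : ℕ}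
    (hs : IsBraidSequence s n) {k : ℕ} (hk : k + 1 < n) :
    SemiconjBy ((List.range n).map s).prod (s k) (s (k + 1)) := by
  obtain ⟨l, rfl⟩ : ∃ l, n = k + 1 + 1 + l := Nat.exists_eq_add_of_le hk
  have h_left : Commute ((List.range k).map s).prod (s (k + 1)) := by
    refine Commute.list_prod_left _ _ fun x hx ↦ ?_
    obtain ⟨i, hi, rfl⟩ := List.mem_map.1 hx
    exact hs.commute i _ (by grind) hk
  have h_middle : SemiconjBy (s k * s (k + 1)) (s k) (s (k + 1)) := by
    simpa only [SemiconjBy, mul_assoc] using hs.braid k hk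
  have h_right : Commute (((List.range l).map (k + 1 + 1 + ·)).map s).prod (s k) := by
    rw [List.map_map]
    refine Commute.list_prod_left _ _ fun x hx ↦ ?_
    obtain ⟨i, hi, rfl⟩ := List.mem_map.1 hx
    exact (hs.commute k (k + 1 + 1 + i) (by omega) (by grind)).symm
  rw [List.range_add, List.map_append, List.prod_append, List.prod_range_succ,
    List.prod_range_succ, mul_assoc _ (s k)]
  exact (h_left.semiconjBy.mul_left h_middle).mul_left h_right.semiconjBy

theorem semiconjBy_pow_of_semiconjBy_succ {r : M} {s : ℕ → M} {n : ℕ}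
    (h : ∀ k, k + 1 < n → SemiconjBy r (s k) (s (k + 1))) {k j : ℕ} (hkj : k + j < n) :
    SemiconjBy (r ^ j) (s k) (s (k + j)) := by
  induction j with
  | zero => simp
  | succ j ih =>
    rw [pow_succ']
    exact (h (k + j) hkj).mul_left (ih (by omega))

theorem semiconjBy_pow_of_modEq {r : G} {s : ℕ → G} {n m : ℕ}
    (h : ∀ k, k + 1 < n → SemiconjBy r (s k) (s (k + 1))) (hr : r ^ m = 1) {i j k : ℕ}
    (hi : i < n) (hk : k < n) (hijk : i ≡ j + k [MOD m]) :
    SemiconjBy (r ^ j) (s k) (s i) := by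
  have from_zero {l : ℕ} (hl : l < n) : SemiconjBy (r ^ l) (s 0) (s l) := by
    simpa using semiconjBy_pow_of_semiconjBy_succ h (k := 0) (j := l) (by simpa)
  have hpow : r ^ j = r ^ i * (r ^ k)⁻¹ := by
    rw [eq_mul_inv_iff_mul_eq, ← pow_add, eq_comm, pow_eq_pow_iff_modEq]
    exact hijk.of_dvd (orderOf_dvd_of_pow_eq_one hr)
  rw [hpow]
  exact (from_zero hi).mul_left (SemiconjBy.inv_symm_left_iff.2 (from_zero hk))

end BraidSequence

section SphereMCG

theorem mk_fgen (m k : ℕ) : PresentedGroup.mk (sphereRels m) (fgen m k) = shat m (k + 1) := by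
  by_cases hk : k < m - 1
  · simp [fgen, shat, hk, PresentedGroup.of]
  · simp [fgen, shat, hk]

theorem isBraidSequence_shat (m : ℕ) : IsBraidSequence (fun k ↦ shat m (k + 1)) (m - 1) where
  braid i hi := by
    simp only [← mk_fgen, ← map_mul]
    have hi' : i < m - 1 := Nat.lt_of_succ_lt hi
    refine PresentedGroup.mk_eq_mk_of_mul_inv_mem (.inl (.inl ⟨⟨i, hi'⟩, ⟨i + 1, hi⟩, rfl, ?_⟩))
    simp [fgen, hi, hi']
  commute i j hij hj := by
    simp only [Commute, SemiconjBy, ← mk_fgen, ← map_mul]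
    have hi : i < m - 1 := by omega
    refine PresentedGroup.mk_eq_mk_of_mul_inv_mem (.inl (.inr ⟨⟨i, hi⟩, ⟨j, hj⟩, hij, ?_⟩))
    simp [fgen, hi, hj]

theorem mk_prod_map_fgen (m : ℕ) (l : List ℕ) :
    PresentedGroup.mk (sphereRels m) (l.map (fgen m)).prod =
      (l.map fun k ↦ shat m (k + 1)).prod := by
  simp [map_list_prod, Function.comp_def, mk_fgen]

theorem ρSph_eq_prod (m : ℕ) :
    ρSph m = ((List.range (m - 1)).map fun k ↦ shat m (k + 1)).prod :=
  mk_prod_map_fgen m _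

theorem ρSph_pow_self (m : ℕ) : ρSph m ^ m = 1 := by
  rw [ρSph, ← map_pow]
  exact PresentedGroup.one_of_mem (.inr (.inr rfl))

theorem ρSph_mul_prod_reverse (m : ℕ) :
    ρSph m * ((List.range (m - 1)).reverse.map fun k ↦ shat m (k + 1)).prod = 1 := by
  rw [ρSph, ← mk_prod_map_fgen, ← map_mul]
  exact PresentedGroup.one_of_mem (.inr (.inl rfl))

theorem shat_mul_ρSph_pow_of_modEq {m i j k : ℕ} (hi : 1 ≤ i) (him : i < m) (hk : 1 ≤ k)
    (hkm : k < m) (h : i ≡ j + k [MOD m]) :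
    shat m i * ρSph m ^ j = ρSph m ^ j * shat m k := by
  obtain ⟨i, rfl⟩ := Nat.exists_eq_add_of_le' hi
  obtain ⟨k, rfl⟩ := Nat.exists_eq_add_of_le' hk
  have hshift (l : ℕ) (hl : l + 1 < m - 1) :
      SemiconjBy (ρSph m) (shat m (l + 1)) (shat m (l + 1 + 1)) := by
    rw [ρSph_eq_prod]
    exact (isBraidSequence_shat m).semiconjBy_prod_range hl
  exact (semiconjBy_pow_of_modEq (s := fun l ↦ shat m (l + 1)) hshift (ρSph_pow_self m)
    (by omega) (by omega) (Nat.ModEq.add_right_cancel' 1 h)).eq.symm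

theorem shat_mul_ρSph_pow_succ {n i : ℕ} (hi : 1 ≤ i) (hin : i ≤ n) :
    shat (n + 1) i * ρSph (n + 1) ^ (i + 1) = ρSph (n + 1) ^ (i + 1) * shat (n + 1) n :=
  shat_mul_ρSph_pow_of_modEq hi (by omega) (by omega) n.lt_succ_self
    (by simp [Nat.ModEq, add_assoc, add_comm 1 n])

theorem inv_prod_shat {n : ℕ} (hn : 1 ≤ n) :
    (((List.range (n - 1)).map fun k ↦ shat (n + 1) (k + 1)).prod)⁻¹ =
      shat (n + 1) n * (ρSph (n + 1))⁻¹ := by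
  obtain ⟨n, rfl⟩ := Nat.exists_eq_add_of_le' hn
  simp [ρSph_eq_prod, List.prod_range_succ]

theorem inv_prod_reverse_shat {n : ℕ} (hn : 1 ≤ n) :
    (((List.range (n - 1)).reverse.map fun k ↦ shat (n + 1) (k + 1)).prod)⁻¹ =
      ρSph (n + 1) * shat (n + 1) n := by
  obtain ⟨n, rfl⟩ := Nat.exists_eq_add_of_le' hn
  refine inv_eq_of_mul_eq_one_left ?_
  simpa [List.range_succ, mul_assoc] using ρSph_mul_prod_reverse (n + 1 + 1)

theorem sphereMCG_rotation_relations_general (n : ℕ) :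
    (∀ i j k : ℕ, 1 ≤ i → i ≤ n → 1 ≤ k → k ≤ n → i ≡ j + k [MOD n + 1] →
        shat (n + 1) i * ρSph (n + 1) ^ j = ρSph (n + 1) ^ j * shat (n + 1) k) ∧
    (∀ i : ℕ, 1 ≤ i → i ≤ n →
        shat (n + 1) i * ρSph (n + 1) ^ i =
          ρSph (n + 1) ^ (i + 1) *
            (((List.range (n - 1)).map fun k ↦ shat (n + 1) (k + 1)).prod)⁻¹) ∧
    (∀ i : ℕ, 1 ≤ i → i ≤ n →
        shat (n + 1) i * ρSph (n + 1) ^ (i + 1) =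
          ρSph (n + 1) ^ i *
            (((List.range (n - 1)).reverse.map fun k ↦ shat (n + 1) (k + 1)).prod)⁻¹) := by
  refine ⟨fun i j k hi hin hk hkn h ↦ ?_, fun i hi hin ↦ ?_, fun i hi hin ↦ ?_⟩
  · exact shat_mul_ρSph_pow_of_modEq hi (by omega) hk (by omega) h
  · rw [inv_prod_shat (hi.trans hin), ← mul_assoc, ← shat_mul_ρSph_pow_succ hi hin, pow_succ,
      mul_assoc, mul_inv_cancel_right]
  · rw [inv_prod_reverse_shat (hi.trans hin), ← mul_assoc, ← pow_succ,
      shat_mul_ρSph_pow_succ hi hin]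

end SphereMCG

/-- **Relations in `MCG(S_{n+1})`** (deduced from Birman's presentation), where `σ̂_i` are
the images of the Artin generators of `B_n` and `ρ` is the rotation by `2π/(n+1)`:
for `1 ≤ i ≤ n-1` and `0 ≤ j ≤ n`,
1. `σ̂_i ρ^j = ρ^j σ̂_{i-j (mod n+1)}` whenever `i - j ≢ 0, n (mod n+1)`;
2. `σ̂_i ρ^i = ρ^{i+1} (σ̂_1 ⋯ σ̂_{n-1})⁻¹`;
3. `σ̂_i ρ^{i+1} = ρ^i (σ̂_{n-1} ⋯ σ̂_1)⁻¹`. -/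
theorem sphereMCG_rotation_relations (n : ℕ) (hn : 3 ≤ n) :
    (∀ i j : ℕ, 1 ≤ i → i ≤ n - 1 → j ≤ n →
        (i + (n + 1) - j) % (n + 1) ≠ 0 → (i + (n + 1) - j) % (n + 1) ≠ n →
        shat (n + 1) i * ρSph (n + 1) ^ j =
          ρSph (n + 1) ^ j * shat (n + 1) ((i + (n + 1) - j) % (n + 1))) ∧
    (∀ i : ℕ, 1 ≤ i → i ≤ n - 1 →
        shat (n + 1) i * ρSph (n + 1) ^ i =
          ρSph (n + 1) ^ (i + 1) *
            (((List.range (n - 1)).map fun k => shat (n + 1) (k + 1)).prod)⁻¹) ∧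
    (∀ i : ℕ, 1 ≤ i → i ≤ n - 1 →
        shat (n + 1) i * ρSph (n + 1) ^ (i + 1) =
          ρSph (n + 1) ^ i *
            (((List.range (n - 1)).reverse.map fun k => shat (n + 1) (k + 1)).prod)⁻¹) := by
  obtain ⟨h₁, h₂, h₃⟩ := sphereMCG_rotation_relations_general n
  exact ⟨fun i j hi hin hj h₀ _ ↦ h₁ i j _ hi (by omega) (Nat.pos_of_ne_zero h₀)
      (Nat.le_of_lt_succ (Nat.mod_lt _ n.succ_pos)) (modEq_add_sub_mod (by omega)),
    fun i hi hin ↦ h₂ i hi (by omega), fun i hi hin ↦ h₃ i hi (by omega)⟩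

end Braids
end

section
/- Let x ∈ B_n be a braid lying in its own Super Summit Set (x ∈ SSS(x)), not rigid, but conjugate to some rigid braid. If g is any positive braid such that g^{-1} x g is rigid, then there is a positive integer k ≤ (n(n−1)/2)·|g| such that 𝔰^k(x) is rigid, where 𝔰 denotes the cyclic sliding operation. -/
namespace Braids

open scoped Classical

/-- A pair of simple elements `(a, b)` is left-weighted if for every non-trivial positive
prefix `t` of `b`, the product `a * t` is not simple. -/
def LeftWeighted {n : ℕ} (a b : Braid n) : Prop :=
  ∀ t : Braid n, t ∈ Pos n → PrefixLE t b → t ≠ 1 → ¬IsSimple (a * t)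

/-- `InfIs x p` says `p = inf(x) = max {m : ℤ | Δ^m ≼ x}`. -/
def InfIs {n : ℕ} (x : Braid n) (p : ℤ) : Prop :=
  PrefixLE (Δ n ^ p) x ∧ ¬PrefixLE (Δ n ^ (p + 1)) x

/-- `IsNormalForm x p l` says that `Δ^p * l.prod` is the left normal form of `x`:
`p = inf(x)`, the factors are simple, the last factor is non-trivial, and consecutive
pairs of factors are left-weighted.  The canonical length is `ℓ(x) = l.length`. -/
def IsNormalForm {n : ℕ} (x : Braid n) (p : ℤ) (l : List (Braid n)) : Prop :=
  x = Δ n ^ p * l.prod ∧ InfIs x p ∧ (∀ s ∈ l, IsSimple s) ∧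
    l.getLast? ≠ some 1 ∧ List.Chain' LeftWeighted l

/-- The canonical length `ℓ(x)`: the number of simple factors in the left normal form. -/
noncomputable def clen {n : ℕ} (x : Braid n) : ℕ :=
  sInf {r | ∃ p l, IsNormalForm x p l ∧ l.length = r}

/-- `InSSS x y` : `y` belongs to the Super Summit Set of `x`, i.e. `y` is a conjugate of `x`
of minimal canonical length among all conjugates of `x`. -/
def InSSS {n : ℕ} (x y : Braid n) : Prop :=
  IsConj x y ∧ ∀ z : Braid n, IsConj x z → clen y ≤ clen z

/-- `IsPreferredPrefix x t` : `t` is the preferred prefix `𝔭(x)`.  If `x = Δ^p x₁ ⋯ x_r`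
is in left normal form with `r > 0`, then `t` is the maximal positive prefix of
`τ^{-p}(x₁) = Δ^p x₁ Δ^{-p}` such that `x_r * t` is simple; if `r = 0` then `t = 1`. -/
def IsPreferredPrefix {n : ℕ} (x t : Braid n) : Prop :=
  ∃ p l, IsNormalForm x p l ∧
    ((l = [] ∧ t = 1) ∨
      ∃ x₁ xr : Braid n, l.head? = some x₁ ∧ l.getLast? = some xr ∧
        t ∈ Pos n ∧ PrefixLE t (Δ n ^ p * x₁ * (Δ n ^ p)⁻¹) ∧ IsSimple (xr * t) ∧
        ∀ t' : Braid n, t' ∈ Pos n → PrefixLE t' (Δ n ^ p * x₁ * (Δ n ^ p)⁻¹) →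
          IsSimple (xr * t') → PrefixLE t' t)

/-- Cyclic sliding: conjugation of `x` by its preferred prefix `𝔭(x)`. -/
noncomputable def slide {n : ℕ} (x : Braid n) : Braid n :=
  if h : ∃ t, IsPreferredPrefix x t then h.choose⁻¹ * x * h.choose else x

/-- A braid is rigid if its preferred prefix is trivial. -/
def Rigid {n : ℕ} (x : Braid n) : Prop := IsPreferredPrefix x 1

/-!
The monoid of positive words modulo the braid relations is cancellative and every element of it
right-divides a power of `Δ`, so by Ore's theorem it embeds in `Braid n`. As it has greatest common
left divisors, `≼` is a left-invariant semilattice order on `Braid n`. If `inf x = p` and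
`sup x = s`, the preferred prefix becomes `𝔭(x) = x Δ^{-p} ⊓ x⁻¹ Δ^s ⊓ Δ`.

For rigid `y` with infimum `p` and supremum `s` this gives `y Δ^{-p} ⊓ y⁻¹ Δ^s = 1`, whence
`inf (y ^ m) = p m` for all `m`. Conjugation changes `inf (y ^ m)` by a bounded amount only, so
`p` is the largest infimum and, passing to inverses, `s` the smallest supremum in the conjugacy
class of `y`. Hence a super summit conjugate `x` of `y` has infimum `p` and supremum `s`.

If moreover `y = g⁻¹ x g` with `g` positive, then `g⁻¹ 𝔭(x)` lies below both `y Δ^{-p}` and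
`y⁻¹ Δ^s`, so `𝔭(x) ≼ g`. Until a rigid braid is reached, each cyclic sliding therefore strips a
nontrivial positive prefix off `g` and lowers its exponent sum, which is at most
`n (n - 1) / 2 * |g|`.
-/

/-! ### Divisibility in graded monoids -/

section Divisibility

variable {M : Type*} [Monoid M]

/-- An additive length function that vanishes only at `1`. -/
structure IsLength (ℓ : M → ℕ) : Prop where
  map_mul : ∀ a b, ℓ (a * b) = ℓ a + ℓ b
  eq_one_of_eq_zero : ∀ a, ℓ a = 0 → a = 1

/-- `c` is a least common right multiple of `a` and `b`, where `a ∣ m` means `m ∈ a * M`. -/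
def IsRightLcm (a b c : M) : Prop := ∀ m, c ∣ m ↔ a ∣ m ∧ b ∣ m

/-- `d` is a greatest common left divisor of `a` and `b`. -/
def IsLeftGcd (a b d : M) : Prop := ∀ m, m ∣ d ↔ m ∣ a ∧ m ∣ b

theorem IsRightLcm.dvd_left {a b c : M} (h : IsRightLcm a b c) : a ∣ c := ((h c).1 dvd_rfl).1

theorem IsRightLcm.dvd_right {a b c : M} (h : IsRightLcm a b c) : b ∣ c := ((h c).1 dvd_rfl).2

theorem IsRightLcm.symm {a b c : M} (h : IsRightLcm a b c) : IsRightLcm b a c := fun m => by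
  rw [h m, and_comm]

theorem isRightLcm_one_left (a : M) : IsRightLcm 1 a a := fun m => by simp

section Cancel

variable [IsLeftCancelMul M]

theorem mul_dvd_mul_left_iff_of_cancel {a b c : M} : a * b ∣ a * c ↔ b ∣ c := by
  simp only [dvd_def, mul_assoc, mul_right_inj]

theorem IsRightLcm.mul_left {a b c : M} (h : IsRightLcm a b c) (d : M) :
    IsRightLcm (d * a) (d * b) (d * c) := by
  intro m
  by_cases hd : d ∣ m
  · obtain ⟨m, rfl⟩ := hd
    simp only [mul_dvd_mul_left_iff_of_cancel, h m]
  · have not_dvd (x : M) : ¬ d * x ∣ m := fun hx => hd (dvd_of_mul_right_dvd hx)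
    simp only [not_dvd, false_and]

theorem IsLeftGcd.mul_left (hgcd : ∀ a b : M, ∃ d, IsLeftGcd a b d) {a b d : M}
    (h : IsLeftGcd a b d) (z : M) : IsLeftGcd (z * a) (z * b) (z * d) := by
  obtain ⟨hda, hdb⟩ := (h d).1 dvd_rfl
  obtain ⟨e, he⟩ := hgcd (z * a) (z * b)
  obtain ⟨e, rfl⟩ : z ∣ e := (he z).2 ⟨dvd_mul_right z a, dvd_mul_right z b⟩
  have hed : e ∣ d := by
    simpa only [mul_dvd_mul_left_iff_of_cancel, ← h e] using (he (z * e)).1 dvd_rfl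
  intro m
  refine ⟨fun hm => ⟨hm.trans (mul_dvd_mul_left z hda), hm.trans (mul_dvd_mul_left z hdb)⟩,
    fun hm => ((he m).2 hm).trans (mul_dvd_mul_left z hed)⟩

end Cancel

namespace IsLength

variable {ℓ : M → ℕ} (hℓ : IsLength ℓ)
include hℓ

theorem pos_of_ne_one {a : M} (ha : a ≠ 1) : 0 < ℓ a :=
  Nat.pos_of_ne_zero fun h => ha (hℓ.eq_one_of_eq_zero a h)

theorem le_of_dvd {a b : M} (h : a ∣ b) : ℓ a ≤ ℓ b := by
  obtain ⟨c, rfl⟩ := h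
  exact (Nat.le_add_right _ _).trans_eq (hℓ.map_mul a c).symm

theorem eq_of_dvd_of_le {a b : M} (h : a ∣ b) (hle : ℓ b ≤ ℓ a) : a = b := by
  obtain ⟨c, rfl⟩ := h
  rw [hℓ.map_mul] at hle
  rw [hℓ.eq_one_of_eq_zero c (by lia), mul_one]

/-- Both elements are peeled atom by atom: `lcm (i * a', j * b')` is obtained from `lcm (i, j)` by
joining first `i * a'` and then `j * b'`, each time after cancelling a common atom. -/
theorem exists_isRightLcm [IsLeftCancelMul M] {A : Set M} (one_notMem : 1 ∉ A)
    (exists_dvd : ∀ x : M, x ≠ 1 → ∃ a ∈ A, a ∣ x)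
    (atom_lcm : ∀ a ∈ A, ∀ b ∈ A, ∀ m, a ∣ m → b ∣ m → ∃ c, IsRightLcm a b c) (a b m : M)
    (ham : a ∣ m) (hbm : b ∣ m) : ∃ c, IsRightLcm a b c := by
  induction hk : ℓ m using Nat.strong_induction_on generalizing a b m with
  | _ k ih =>
  subst hk
  have lcm_mul_left {i : M} (hi : i ∈ A) (x y : M) (hx : i * x ∣ m) (hy : i * y ∣ m) :
      ∃ c, IsRightLcm (i * x) (i * y) (i * c) ∧ i * c ∣ m := by
    obtain ⟨m', rfl⟩ := dvd_of_mul_right_dvd hx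
    have lt : ℓ m' < ℓ (i * m') := by
      rw [hℓ.map_mul]
      exact Nat.lt_add_of_pos_left (hℓ.pos_of_ne_one fun h => one_notMem (h ▸ hi))
    obtain ⟨c, hc⟩ := ih _ lt x y m' (mul_dvd_mul_left_iff_of_cancel.1 hx)
      (mul_dvd_mul_left_iff_of_cancel.1 hy) rfl
    exact ⟨c, hc.mul_left i, (hc.mul_left i _).2 ⟨hx, hy⟩⟩
  rcases eq_or_ne a 1 with rfl | ha
  · exact ⟨b, isRightLcm_one_left b⟩
  rcases eq_or_ne b 1 with rfl | hb
  · exact ⟨a, (isRightLcm_one_left a).symm⟩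
  obtain ⟨i, hi, a, rfl⟩ := exists_dvd a ha
  obtain ⟨j, hj, b, rfl⟩ := exists_dvd b hb
  obtain ⟨c, hc⟩ := atom_lcm i hi j hj m (dvd_of_mul_right_dvd ham) (dvd_of_mul_right_dvd hbm)
  have hcm : c ∣ m := (hc m).2 ⟨dvd_of_mul_right_dvd ham, dvd_of_mul_right_dvd hbm⟩
  obtain ⟨r, rfl⟩ := hc.dvd_left
  obtain ⟨u, hu, hum⟩ := lcm_mul_left hi a r ham hcm
  obtain ⟨w, hw⟩ : j ∣ i * u := hc.dvd_right.trans hu.dvd_right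
  obtain ⟨v, hv, -⟩ := lcm_mul_left hj w b (hw ▸ hum) hbm
  refine ⟨j * v, fun x => ?_⟩
  rw [hv x, ← hw, hu x, hc x]
  exact ⟨fun h => ⟨h.1.1, h.2⟩, fun h => ⟨⟨h.1, dvd_of_mul_right_dvd h.1,
    dvd_of_mul_right_dvd h.2⟩, h.2⟩⟩

/-- A common divisor of maximal length absorbs every other one through their lcm. -/
theorem exists_isLeftGcd (hlcm : ∀ a b m : M, a ∣ m → b ∣ m → ∃ c, IsRightLcm a b c) (a b : M) :
    ∃ d, IsLeftGcd a b d := by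
  let lengths : Set ℕ := {k | ∃ d, d ∣ a ∧ d ∣ b ∧ ℓ d = k}
  have bdd : BddAbove lengths := ⟨ℓ a, fun _ ⟨_, hda, _, h⟩ => h ▸ hℓ.le_of_dvd hda⟩
  have nonempty : lengths.Nonempty := ⟨ℓ 1, 1, one_dvd a, one_dvd b, rfl⟩
  obtain ⟨d, hda, hdb, hd⟩ := Nat.sSup_mem nonempty bdd
  refine ⟨d, fun m => ⟨fun hm => ⟨hm.trans hda, hm.trans hdb⟩, fun ⟨hma, hmb⟩ => ?_⟩⟩
  obtain ⟨e, he⟩ := hlcm d m a hda hma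
  have le : ℓ e ≤ ℓ d :=
    hd ▸ le_csSup bdd ⟨e, (he a).2 ⟨hda, hma⟩, (he b).2 ⟨hdb, hmb⟩, rfl⟩
  exact hℓ.eq_of_dvd_of_le he.dvd_left le ▸ he.dvd_right

end IsLength

end Divisibility

/-! ### Embedding a monoid into its group of left fractions -/

section Fractions

universe u

/-- The Ore structure on the whole of a right cancellative monoid with common left multiples. -/
@[reducible]
noncomputable def oreSetTop (M : Type u) [Monoid M] [IsRightCancelMul M]
    (exists_mul_eq_mul : ∀ r s : M, ∃ a b, a * r = b * s) :
    OreLocalization.OreSet (⊤ : Submonoid M) where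
  ore_right_cancel _ _ _ h := ⟨1, congrArg _ (mul_right_cancel h)⟩
  oreNum r s := (exists_mul_eq_mul r s).choose_spec.choose
  oreDenom r s := ⟨(exists_mul_eq_mul r s).choose, trivial⟩
  ore_eq r s := (exists_mul_eq_mul r s).choose_spec.choose_spec

theorem exists_injective_hom_group (M : Type u) [Monoid M] [IsCancelMul M]
    (exists_mul_eq_mul : ∀ r s : M, ∃ a b, a * r = b * s) :
    ∃ (G : Type u) (_ : Group G) (f : M →* G), Function.Injective f := by
  let _ := oreSetTop M exists_mul_eq_mul
  let L := OreLocalization (⊤ : Submonoid M) M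
  let f : M →* Lˣ :=
    { toFun := fun x => OreLocalization.numeratorUnit ⟨x, trivial⟩
      map_one' := Units.ext (map_one OreLocalization.numeratorHom)
      map_mul' := fun x y => Units.ext (map_mul OreLocalization.numeratorHom x y) }
  refine ⟨Lˣ, inferInstance, f, fun x y h => ?_⟩
  have h : OreLocalization.numeratorHom x = (OreLocalization.numeratorHom y : L) :=
    congrArg Units.val h
  rw [OreLocalization.numeratorHom_apply, OreLocalization.numeratorHom_apply,
    OreLocalization.oreDiv_eq_iff] at h
  obtain ⟨a, b, hab, hden⟩ := h
  simp only [Submonoid.coe_one, mul_one] at hden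
  rw [← hden] at hab
  exact (mul_left_cancel hab).symm

variable {M G : Type*} [Monoid M] [Group G]

theorem inv_mul_mem_mrange_iff_dvd {f : M →* G} (hf : Function.Injective f) {a b : M} :
    (f a)⁻¹ * f b ∈ MonoidHom.mrange f ↔ a ∣ b := by
  simp only [MonoidHom.mem_mrange, eq_inv_mul_iff_mul_eq, ← map_mul, hf.eq_iff, dvd_def,
    eq_comm]

/-- Multiplying by a common denominator moves the elements into the monoid, where the gcd is a
greatest lower bound among divisors; it remains one among all fractions because gcds are
compatible with left multiplication. -/
theorem exists_meet_of_isLeftGcd [IsLeftCancelMul M] {f : M →* G} (hf : Function.Injective f)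
    (hgcd : ∀ a b : M, ∃ d, IsLeftGcd a b d)
    (exists_denom : ∀ x : G, ∃ z a : M, f z * x = f a) (x y : G) :
    ∃ m : G, ∀ w : G, w⁻¹ * m ∈ MonoidHom.mrange f ↔
      w⁻¹ * x ∈ MonoidHom.mrange f ∧ w⁻¹ * y ∈ MonoidHom.mrange f := by
  obtain ⟨z, a, hx⟩ := exists_denom x
  obtain ⟨z', b, hy⟩ := exists_denom (f z * y)
  obtain ⟨d, hd⟩ := hgcd (z' * a) b
  have hx' : f (z' * z) * x = f (z' * a) := by rw [map_mul, mul_assoc, hx, map_mul]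
  have hy' : f (z' * z) * y = f b := by rw [map_mul, mul_assoc, hy]
  refine ⟨(f (z' * z))⁻¹ * f d, fun w => ?_⟩
  obtain ⟨t, c, hw⟩ := exists_denom (f (z' * z) * w)
  have translate {u : G} {e : M} (hu : f (z' * z) * u = f e) :
      w⁻¹ * u ∈ MonoidHom.mrange f ↔ c ∣ t * e := by
    rw [← inv_mul_mem_mrange_iff_dvd hf, map_mul, ← hu, ← hw]
    group
  rw [translate (mul_inv_cancel_left _ _), translate hx', translate hy']
  exact hd.mul_left hgcd t c

end Fractions

/-! ### The half-twist -/

section HalfTwist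

variable {M : Type*} [Monoid M]

/-- The sequence `s` satisfies the braid relations in the range of indices below `N`. -/
structure BraidRelations (s : ℕ → M) (N : ℕ) : Prop where
  braid : ∀ i, i + 1 < N → s i * s (i + 1) * s i = s (i + 1) * s i * s (i + 1)
  commute : ∀ i j, i + 2 ≤ j → j < N → Commute (s i) (s j)

/-- The product `s (k - 1) * ⋯ * s 1 * s 0`. -/
def descending (s : ℕ → M) : ℕ → M
  | 0 => 1
  | k + 1 => s k * descending s k

/-- The product `s 0 * s 1 * ⋯ * s (k - 1)`. -/
def ascending (s : ℕ → M) : ℕ → M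
  | 0 => 1
  | k + 1 => ascending s k * s k

/-- The half-twist on `k + 1` strands, written in the generators `s 0, …, s (k - 1)`. -/
def halfTwist (s : ℕ → M) : ℕ → M
  | 0 => 1
  | k + 1 => halfTwist s k * descending s (k + 1)

theorem descending_eq_prod (s : ℕ → M) (k : ℕ) :
    descending s k = ((List.range k).reverse.map s).prod := by
  induction k with
  | zero => rfl
  | succ k ih => simp [descending, ih, List.range_succ]

theorem halfTwist_eq_prod (s : ℕ → M) (k : ℕ) :
    halfTwist s k =
      ((((List.range k).map fun k => (List.range (k + 1)).reverse).flatten).map s).prod := by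
  induction k with
  | zero => rfl
  | succ k ih =>
    rw [halfTwist, ih, descending_eq_prod, List.range_succ (n := k), List.map_append,
      List.flatten_append, List.map_append, List.prod_append, List.map_singleton,
      List.flatten_singleton, List.range_succ]

theorem map_descending {P : Type*} [Monoid P] (f : M →* P) (s : ℕ → M) (k : ℕ) :
    f (descending s k) = descending (f ∘ s) k := by
  induction k with
  | zero => exact map_one f
  | succ k ih => rw [descending, descending, map_mul, ih, Function.comp_apply]

theorem map_halfTwist {P : Type*} [Monoid P] (f : M →* P) (s : ℕ → M) (k : ℕ) :
    f (halfTwist s k) = halfTwist (f ∘ s) k := by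
  induction k with
  | zero => exact map_one f
  | succ k ih => rw [halfTwist, halfTwist, map_mul, ih, map_descending]

theorem descending_eq_pow {s : ℕ → M} {k : ℕ} {x : M} (h : ∀ i < k, s i = x) :
    descending s k = x ^ k := by
  induction k with
  | zero => exact (pow_zero x).symm
  | succ k ih =>
    rw [descending, ih fun i hi => h i (hi.trans k.lt_succ_self), h k k.lt_succ_self, pow_succ']

theorem halfTwist_eq_pow {s : ℕ → M} {k : ℕ} {x : M} (h : ∀ i < k, s i = x) :
    halfTwist s k = x ^ ∑ i ∈ Finset.range (k + 1), i := by
  induction k with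
  | zero => simp [halfTwist]
  | succ k ih =>
    rw [halfTwist, ih fun i hi => h i (hi.trans k.lt_succ_self), descending_eq_pow h, ← pow_add,
      Finset.sum_range_succ _ (k + 1)]

theorem op_ascending (s : ℕ → M) (k : ℕ) :
    MulOpposite.op (ascending s k) = descending (MulOpposite.op ∘ s) k := by
  induction k with
  | zero => rfl
  | succ k ih => rw [ascending, descending, MulOpposite.op_mul, ih, Function.comp_apply]

theorem dvd_ascending_succ (s : ℕ → M) (k : ℕ) : s 0 ∣ ascending s (k + 1) := by
  induction k with
  | zero => exact (one_mul (s 0)).symm.dvd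
  | succ k ih => exact dvd_mul_of_dvd_left ih _

theorem commute_descending {s : ℕ → M} {k : ℕ} {x : M} (h : ∀ i < k, Commute (s i) x) :
    Commute (descending s k) x := by
  induction k with
  | zero => exact Commute.one_left x
  | succ k ih => exact (h k k.lt_succ_self).mul_left (ih fun i hi => h i (hi.trans k.lt_succ_self))

theorem commute_halfTwist {s : ℕ → M} {k : ℕ} {x : M} (h : ∀ i < k, Commute (s i) x) :
    Commute (halfTwist s k) x := by
  induction k with
  | zero => exact Commute.one_left x
  | succ k ih =>
    exact (ih fun i hi => h i (hi.trans k.lt_succ_self)).mul_left (commute_descending h)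

namespace BraidRelations

variable {s : ℕ → M} {N : ℕ} (hs : BraidRelations s N)
include hs

theorem op : BraidRelations (MulOpposite.op ∘ s) N where
  braid i hi := by
    simpa only [Function.comp_apply, ← MulOpposite.op_mul, mul_assoc] using
      congrArg MulOpposite.op (hs.braid i hi)
  commute i j hij hj := (hs.commute i j hij hj).op

theorem semiconjBy_descending {k i : ℕ} (hi : i + 1 < k) (hk : k ≤ N) :
    SemiconjBy (descending s k) (s (i + 1)) (s i) := by
  induction k with
  | zero => lia
  | succ k ih =>
    rcases eq_or_lt_of_le (Nat.lt_succ_iff.1 hi) with rfl | hik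
    · have comm : Commute (descending s i) (s (i + 1)) :=
        commute_descending fun j hj => hs.commute j (i + 1) (by lia) hk
      calc s (i + 1) * (s i * descending s i) * s (i + 1)
          = s (i + 1) * s i * (descending s i * s (i + 1)) := by simp only [mul_assoc]
        _ = s (i + 1) * s i * s (i + 1) * descending s i := by rw [comm.eq, ← mul_assoc]
        _ = s i * (s (i + 1) * (s i * descending s i)) := by
          rw [← hs.braid i hk]; simp only [mul_assoc]
    · exact (hs.commute i k hik hk).symm.semiconjBy.mul_left (ih hik (by lia))

theorem semiconjBy_ascending {k i : ℕ} (hi : i + 1 < k) (hk : k ≤ N) :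
    SemiconjBy (ascending s k) (s i) (s (i + 1)) := by
  have h := (hs.op.semiconjBy_descending hi hk).eq
  rw [← op_ascending] at h
  exact (MulOpposite.op_injective h).symm

theorem halfTwist_succ_eq {k : ℕ} (hk : k < N) :
    halfTwist s (k + 1) = ascending s (k + 1) * halfTwist s k := by
  induction k with
  | zero => simp [halfTwist, ascending, descending]
  | succ k ih =>
    have comm : Commute (halfTwist s k) (s (k + 1)) :=
      commute_halfTwist fun j hj => hs.commute j (k + 1) (by lia) hk
    calc halfTwist s (k + 1) * (s (k + 1) * descending s (k + 1))
        = ascending s (k + 1) * (halfTwist s k * s (k + 1)) * descending s (k + 1) := by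
          rw [ih (by lia)]; simp only [mul_assoc]
      _ = ascending s (k + 1) * s (k + 1) * (halfTwist s k * descending s (k + 1)) := by
          rw [comm.eq]; simp only [mul_assoc]

theorem semiconjBy_halfTwist {k i : ℕ} (hi : i < k) (hk : k ≤ N) :
    SemiconjBy (halfTwist s k) (s i) (s (k - 1 - i)) := by
  induction k generalizing i with
  | zero => lia
  | succ k ih =>
    rcases i with _ | i
    · rcases k with _ | k
      · simp [halfTwist, descending, SemiconjBy]
      · rw [hs.halfTwist_succ_eq hk]
        exact (hs.semiconjBy_ascending (by lia) hk).mul_left (ih k.succ_pos (by lia))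
    · have h := (ih (i := i) (by lia) (by lia)).mul_left
        (hs.semiconjBy_descending (i := i) hi hk)
      rwa [show k - 1 - i = k + 1 - 1 - (i + 1) by lia] at h

theorem exists_halfTwist_eq_mul [IsLeftCancelMul M] {k i : ℕ} (hi : i < k) (hk : k ≤ N) :
    ∃ z, halfTwist s k = z * s i := by
  induction k with
  | zero => lia
  | succ k ih =>
    rcases eq_or_lt_of_le (Nat.lt_succ_iff.1 hi) with rfl | hik
    · obtain ⟨z, hz⟩ := dvd_ascending_succ s i
      have flip : halfTwist s (i + 1) * s i = s 0 * halfTwist s (i + 1) := by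
        simpa using (hs.semiconjBy_halfTwist hi hk).eq
      refine ⟨z * halfTwist s i, mul_left_cancel (a := s 0) ?_⟩
      rw [← flip, hs.halfTwist_succ_eq hk, hz]
      simp only [mul_assoc]
    · obtain ⟨z, hz⟩ := ih hik (by lia)
      exact ⟨ascending s (k + 1) * z, by rw [hs.halfTwist_succ_eq hk, hz, mul_assoc]⟩

end BraidRelations

end HalfTwist

/-! ### Artin monoids of triangle-free graphs -/

section ArtinMonoid

variable {ι : Type*} (Γ : SimpleGraph ι)

/-- The defining relations of the simply laced Artin monoid with Coxeter graph `Γ`. -/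
inductive ArtinRel : FreeMonoid ι → FreeMonoid ι → Prop
  | braid {i j : ι} : Γ.Adj i j → ArtinRel (.of i * .of j * .of i) (.of j * .of i * .of j)
  | comm {i j : ι} : ¬Γ.Adj i j → ArtinRel (.of i * .of j) (.of j * .of i)

/-- The simply laced Artin monoid with Coxeter graph `Γ`: adjacent generators satisfy the braid
relation, the other ones commute. -/
abbrev ArtinMonoid := PresentedMonoid (ArtinRel Γ)

namespace ArtinMonoid

variable {Γ}

/-- The generator of the Artin monoid attached to a vertex. -/
def gen (i : ι) : ArtinMonoid Γ := PresentedMonoid.of (ArtinRel Γ) i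

theorem closure_range_gen : Submonoid.closure (Set.range (gen (Γ := Γ))) = ⊤ :=
  PresentedMonoid.closure_range_of _

theorem gen_mul_gen_mul_gen {i j : ι} (h : Γ.Adj i j) :
    (gen i * gen j * gen i : ArtinMonoid Γ) = gen j * gen i * gen j :=
  PresentedMonoid.mk_eq_mk_of_rel (.braid h)

theorem commute_gen {i j : ι} (h : ¬Γ.Adj i j) : Commute (gen i : ArtinMonoid Γ) (gen j) :=
  PresentedMonoid.mk_eq_mk_of_rel (.comm h)

theorem braid_mul {i j : ι} (h : Γ.Adj i j) (x : ArtinMonoid Γ) :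
    gen i * (gen j * (gen i * x)) = gen j * (gen i * (gen j * x)) := by
  simpa only [mul_assoc] using congrArg (· * x) (gen_mul_gen_mul_gen h)

theorem comm_mul {i j : ι} (h : ¬Γ.Adj i j) (x : ArtinMonoid Γ) :
    gen i * (gen j * x) = gen j * (gen i * x) :=
  (commute_gen h).left_comm x

/-- Artin relations are homogeneous, so word length descends to the monoid. -/
def lengthHom : ArtinMonoid Γ →* Multiplicative ℕ :=
  PresentedMonoid.lift (fun _ => Multiplicative.ofAdd 1) fun a b h => by cases h <;> rfl

/-- The length of any word representing an element of the Artin monoid. -/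
def length (x : ArtinMonoid Γ) : ℕ := (lengthHom x).toAdd

@[simp] theorem length_one : length (1 : ArtinMonoid Γ) = 0 := rfl

@[simp] theorem length_gen (i : ι) : length (gen i : ArtinMonoid Γ) = 1 := rfl

@[simp] theorem length_mul (x y : ArtinMonoid Γ) : length (x * y) = length x + length y := by
  rw [length, map_mul, toAdd_mul]; rfl

theorem eq_one_or_exists_gen_mul (x : ArtinMonoid Γ) : x = 1 ∨ ∃ i y, x = gen i * y := by
  induction (closure_range_gen.ge trivial : x ∈ Submonoid.closure _) using
    Submonoid.closure_induction_left with
  | one => exact .inl rfl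
  | mul_left _ h y _ _ =>
    obtain ⟨i, rfl⟩ := h
    exact .inr ⟨i, y, rfl⟩

theorem isLength_length : IsLength (length (Γ := Γ)) where
  map_mul := length_mul
  eq_one_of_eq_zero x h := by
    obtain rfl | ⟨i, y, rfl⟩ := eq_one_or_exists_gen_mul x
    · rfl
    · simp at h

@[simp] theorem length_mk (w : FreeMonoid ι) :
    length (PresentedMonoid.mk (ArtinRel Γ) w) = w.toList.length := by
  induction w with
  | one => rfl
  | of i => rfl
  | mul x y hx hy => rw [map_mul, length_mul, hx, hy, FreeMonoid.toList_mul, List.length_append]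

/-- The right complement of `gen i` in the least common right multiple of `gen i` and `gen j`. -/
noncomputable def complement (i j : ι) : ArtinMonoid Γ :=
  if i = j then 1 else if Γ.Adj i j then gen j * gen i else gen j

@[simp] theorem complement_self (i : ι) : (complement i i : ArtinMonoid Γ) = 1 := if_pos rfl

theorem complement_of_adj {i j : ι} (h : Γ.Adj i j) :
    (complement i j : ArtinMonoid Γ) = gen j * gen i := by
  rw [complement, if_neg h.ne, if_pos h]

theorem complement_of_not_adj {i j : ι} (hne : i ≠ j) (h : ¬Γ.Adj i j) :
    (complement i j : ArtinMonoid Γ) = gen j := by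
  rw [complement, if_neg hne, if_neg h]

theorem gen_mul_complement (i j : ι) :
    (gen i * complement i j : ArtinMonoid Γ) = gen j * complement j i := by
  rcases eq_or_ne i j with rfl | hne
  · rfl
  by_cases h : Γ.Adj i j
  · rw [complement_of_adj h, complement_of_adj h.symm, ← mul_assoc, ← mul_assoc,
      gen_mul_gen_mul_gen h]
  · rw [complement_of_not_adj hne h, complement_of_not_adj hne.symm (mt .symm h),
      (commute_gen h).eq]

theorem commute_gen_complement {d i j : ι} (hi : ¬Γ.Adj d i) (hj : ¬Γ.Adj d j) :
    Commute (gen d) (complement i j : ArtinMonoid Γ) := by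
  unfold complement
  split_ifs
  · exact Commute.one_right _
  · exact (commute_gen hj).mul_right (commute_gen hi)
  · exact commute_gen hj

/-- `gen i * u` and `gen j * v` agree because both are the same right multiple of the least
common multiple of `gen i` and `gen j`. -/
def Linked (i : ι) (u : ArtinMonoid Γ) (j : ι) (v : ArtinMonoid Γ) : Prop :=
  ∃ w, u = complement i j * w ∧ v = complement j i * w

theorem linked_self_iff {i : ι} {u v : ArtinMonoid Γ} : Linked i u i v ↔ u = v := by
  simp [Linked, eq_comm]

theorem linked_iff_of_adj {i j : ι} (h : Γ.Adj i j) {u v : ArtinMonoid Γ} :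
    Linked i u j v ↔ ∃ w, u = gen j * (gen i * w) ∧ v = gen i * (gen j * w) := by
  simp only [Linked, complement_of_adj h, complement_of_adj h.symm, mul_assoc]

theorem linked_iff_of_not_adj {i j : ι} (hne : i ≠ j) (h : ¬Γ.Adj i j) {u v : ArtinMonoid Γ} :
    Linked i u j v ↔ ∃ w, u = gen j * w ∧ v = gen i * w := by
  simp only [Linked, complement_of_not_adj hne h, complement_of_not_adj hne.symm (mt .symm h)]

theorem Linked.symm {i j : ι} {u v : ArtinMonoid Γ} : Linked i u j v → Linked j v i u :=
  fun ⟨w, hu, hv⟩ => ⟨w, hv, hu⟩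

theorem Linked.mul_right {i j : ι} {u v : ArtinMonoid Γ} (h : Linked i u j v)
    (x : ArtinMonoid Γ) : Linked i (u * x) j (v * x) := by
  obtain ⟨w, rfl, rfl⟩ := h
  exact ⟨w * x, mul_assoc .., mul_assoc ..⟩

theorem Linked.gen_mul {d i j : ι} {u v : ArtinMonoid Γ} (h : Linked i u j v)
    (hi : ¬Γ.Adj d i) (hj : ¬Γ.Adj d j) : Linked i (gen d * u) j (gen d * v) := by
  obtain ⟨w, rfl, rfl⟩ := h
  exact ⟨gen d * w, (commute_gen_complement hi hj).left_comm w,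
    (commute_gen_complement hj hi).left_comm w⟩

variable (Γ) in
/-- All coincidences `gen i * u = gen j * v` with `u` of length less than `k` come from the least
common multiple of the two generators. -/
def CoincidencesLinkedBelow (k : ℕ) : Prop :=
  ∀ (i j : ι) (u v : ArtinMonoid Γ), length u < k → gen i * u = gen j * v → Linked i u j v

section Cube

variable {k : ℕ} (H : CoincidencesLinkedBelow Γ k)
include H

theorem CoincidencesLinkedBelow.gen_cancel {i : ι} {u v : ArtinMonoid Γ}
    (h : gen i * u = gen i * v) (hu : length u < k) : u = v :=
  linked_self_iff.1 (H i i u v hu h)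

theorem CoincidencesLinkedBelow.complement_cancel {i j : ι} {u v : ArtinMonoid Γ}
    (h : complement i j * u = complement i j * v) (hu : length (complement i j * u) ≤ k) :
    u = v := by
  unfold complement at h hu
  split_ifs at h hu
  · simpa using h
  · simp only [mul_assoc, length_mul, length_gen] at h hu
    exact H.gen_cancel (H.gen_cancel h (by rw [length_mul, length_gen]; lia)) (by lia)
  · rw [length_mul, length_gen] at hu
    exact H.gen_cancel h (by lia)

variable {c d e : ι} {u v t : ArtinMonoid Γ}

theorem Linked.trans_of_not_adj (hcd : ¬Γ.Adj c d) (hde : ¬Γ.Adj d e) (ncd : c ≠ d) (nde : d ≠ e)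
    (h : Linked c u d v) (h' : Linked d v e t) (hv : length v ≤ k) : Linked c u e t := by
  obtain ⟨w, rfl, rfl⟩ := (linked_iff_of_not_adj ncd hcd).1 h
  obtain ⟨w', hw', rfl⟩ := (linked_iff_of_not_adj nde hde).1 h'
  rw [length_mul, length_gen] at hv
  exact (H c e w w' (by lia) hw').gen_mul (mt .symm hcd) hde

theorem Linked.trans_of_adj_left (hcd : Γ.Adj c d) (hde : ¬Γ.Adj d e) (hce : ¬Γ.Adj c e)
    (nde : d ≠ e) (nce : c ≠ e)
    (h : Linked c u d v) (h' : Linked d v e t) (hv : length v ≤ k) : Linked c u e t := by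
  obtain ⟨w, rfl, rfl⟩ := (linked_iff_of_adj hcd).1 h
  obtain ⟨w', hw', rfl⟩ := (linked_iff_of_not_adj nde hde).1 h'
  simp only [length_mul, length_gen] at hv
  obtain ⟨y, hy, rfl⟩ := (linked_iff_of_not_adj nce hce).1
    (H c e _ _ (by rw [length_mul, length_gen]; lia) hw')
  obtain ⟨z, rfl, rfl⟩ := (linked_iff_of_not_adj nde hde).1 (H d e _ _ (by lia) hy)
  refine (linked_iff_of_not_adj nce hce).2 ⟨gen d * (gen c * z), ?_, braid_mul hcd.symm z⟩
  rw [comm_mul hce, comm_mul hde]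

theorem Linked.trans_of_adj_left_of_adj (hcd : Γ.Adj c d) (hde : ¬Γ.Adj d e) (hce : Γ.Adj c e)
    (nde : d ≠ e)
    (h : Linked c u d v) (h' : Linked d v e t) (hv : length v ≤ k) : Linked c u e t := by
  obtain ⟨w, rfl, rfl⟩ := (linked_iff_of_adj hcd).1 h
  obtain ⟨w', hw', rfl⟩ := (linked_iff_of_not_adj nde hde).1 h'
  simp only [length_mul, length_gen] at hv
  obtain ⟨y, hy, rfl⟩ := (linked_iff_of_adj hce).1
    (H c e _ _ (by rw [length_mul, length_gen]; lia) hw')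
  obtain ⟨z, rfl, hz⟩ := (linked_iff_of_not_adj nde hde).1 (H d e _ _ (by lia) hy)
  rw [length_mul, length_gen] at hv
  have hy' := congrArg length hy
  simp only [length_mul, length_gen] at hy'
  obtain ⟨q, rfl, rfl⟩ := (linked_iff_of_adj hcd).1 (H c d _ _ (by lia) hz)
  refine (linked_iff_of_adj hce).2 ⟨gen d * (gen c * (gen e * q)), ?_, ?_⟩
  · rw [braid_mul hce, comm_mul hde, comm_mul (mt .symm hde) q, braid_mul hcd.symm]
  · rw [comm_mul (mt .symm hde), braid_mul hcd.symm, braid_mul hce, comm_mul hde]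

theorem Linked.trans_of_adj_of_adj (hcd : Γ.Adj c d) (hde : Γ.Adj d e) (hce : ¬Γ.Adj c e)
    (nce : c ≠ e)
    (h : Linked c u d v) (h' : Linked d v e t) (hv : length v ≤ k) : Linked c u e t := by
  obtain ⟨w, rfl, rfl⟩ := (linked_iff_of_adj hcd).1 h
  obtain ⟨w', hw', rfl⟩ := (linked_iff_of_adj hde).1 h'
  have hlen := congrArg length hw'
  simp only [length_mul, length_gen] at hv hlen
  obtain ⟨y, hy, hy'⟩ := (linked_iff_of_not_adj nce hce).1
    (H c e _ _ (by rw [length_mul, length_gen]; lia) hw')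
  obtain ⟨z, rfl, rfl⟩ := (linked_iff_of_adj hde).1 (H d e _ _ (by lia) hy)
  obtain ⟨z', rfl, hz'⟩ := (linked_iff_of_adj hcd.symm).1 (H d c _ _ (by lia) hy')
  simp only [length_mul, length_gen] at hv hlen
  have hz := H.gen_cancel hz' (by rw [length_mul, length_gen]; lia)
  obtain ⟨q, rfl, rfl⟩ := (linked_iff_of_not_adj nce.symm (mt .symm hce)).1
    (H e c _ _ (by lia) hz)
  refine (linked_iff_of_not_adj nce hce).2 ⟨gen d * (gen e * (gen c * (gen d * q))), ?_, ?_⟩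
  · rw [comm_mul hce, braid_mul hcd, braid_mul hde]
  · rw [comm_mul (mt .symm hce), braid_mul hde.symm, braid_mul hcd.symm, comm_mul hce]

/-- This is the cube condition of Garside theory, checked on every three-vertex subgraph. -/
theorem Linked.trans (hΓ : Γ.CliqueFree 3) (h : Linked c u d v) (h' : Linked d v e t)
    (hv : length v ≤ k) : Linked c u e t := by
  rcases eq_or_ne c d with rfl | ncd
  · rwa [linked_self_iff.1 h]
  rcases eq_or_ne d e with rfl | nde
  · rwa [← linked_self_iff.1 h']
  rcases eq_or_ne c e with rfl | nce
  · obtain ⟨w, rfl, rfl⟩ := h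
    obtain ⟨w', hw', rfl⟩ := h'
    rw [H.complement_cancel hw' hv, linked_self_iff]
  by_cases hcd : Γ.Adj c d <;> by_cases hde : Γ.Adj d e <;> by_cases hce : Γ.Adj c e
  · exact (hΓ _ (SimpleGraph.is3Clique_triple_iff.2 ⟨hcd, hce, hde⟩)).elim
  · exact Linked.trans_of_adj_of_adj H hcd hde hce nce h h' hv
  · exact Linked.trans_of_adj_left_of_adj H hcd hde hce nde h h' hv
  · exact Linked.trans_of_adj_left H hcd hde hce nde nce h h' hv
  · exact (Linked.trans_of_adj_left_of_adj H hde.symm (mt .symm hcd) hce.symm ncd.symm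
      h'.symm h.symm hv).symm
  · exact (Linked.trans_of_adj_left H hde.symm (mt .symm hcd) (mt .symm hce) ncd.symm nce.symm
      h'.symm h.symm hv).symm
  · exact Linked.trans_of_not_adj H hcd hde ncd nde h h' hv
  · exact Linked.trans_of_not_adj H hcd hde ncd nde h h' hv

end Cube

/-- The tails of two nonempty words, read as elements of the Artin monoid, are linked through the
first letters; the empty word is related only to itself. -/
def HeadLinked : List ι → List ι → Prop
  | i :: u, j :: v => Linked i (PresentedMonoid.mk (ArtinRel Γ) (.ofList u)) j
      (PresentedMonoid.mk (ArtinRel Γ) (.ofList v))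
  | [], [] => True
  | _, _ => False

theorem HeadLinked.refl : ∀ x : List ι, HeadLinked (Γ := Γ) x x
  | [] => trivial
  | _ :: _ => linked_self_iff.2 rfl

theorem HeadLinked.symm : ∀ {x y : List ι}, HeadLinked (Γ := Γ) x y → HeadLinked (Γ := Γ) y x
  | [], [], _ => trivial
  | _ :: _, _ :: _, h => Linked.symm h

theorem HeadLinked.trans (hΓ : Γ.CliqueFree 3) {k : ℕ} (H : CoincidencesLinkedBelow Γ k) :
    ∀ {x y z : List ι}, y.length ≤ k + 1 → HeadLinked (Γ := Γ) x y → HeadLinked (Γ := Γ) y z →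
      HeadLinked (Γ := Γ) x z
  | [], [], [], _, _, _ => trivial
  | _ :: _, _ :: v, _ :: _, hy, hxy, hyz =>
    Linked.trans H hΓ hxy hyz (by rw [length_mk]; exact Nat.le_of_succ_le_succ hy)

theorem HeadLinked.append {x x' y y' : List ι} (hx : HeadLinked (Γ := Γ) x x')
    (hy : HeadLinked (Γ := Γ) y y') (hmk : PresentedMonoid.mk (ArtinRel Γ) (.ofList y) =
      PresentedMonoid.mk (ArtinRel Γ) (.ofList y')) : HeadLinked (Γ := Γ) (x ++ y) (x' ++ y') := by
  match x, x', hx with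
  | [], [], _ => exact hy
  | i :: u, j :: v, h =>
    have h := Linked.mul_right h (PresentedMonoid.mk (ArtinRel Γ) (.ofList y))
    rw [← map_mul (PresentedMonoid.mk _), hmk, ← map_mul (PresentedMonoid.mk _)] at h
    exact h

theorem ArtinRel.headLinked {x y : FreeMonoid ι} (h : ArtinRel Γ x y) :
    HeadLinked (Γ := Γ) x.toList y.toList := by
  cases h with
  | braid h => exact (linked_iff_of_adj h).2 ⟨1, rfl, rfl⟩
  | @comm i j h =>
    rcases eq_or_ne i j with rfl | hne
    · exact HeadLinked.refl _
    · exact (linked_iff_of_not_adj hne h).2 ⟨1, rfl, rfl⟩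

/-- Being equal in the monoid with linked heads is a congruence on words of length at most `k + 1`:
this contains the defining relations, hence every equality. -/
theorem headLinked_of_mk_eq_mk (hΓ : Γ.CliqueFree 3) {k : ℕ} (H : CoincidencesLinkedBelow Γ k)
    {x y : FreeMonoid ι}
    (h : PresentedMonoid.mk (ArtinRel Γ) x = PresentedMonoid.mk (ArtinRel Γ) y)
    (hx : x.toList.length ≤ k + 1) : HeadLinked (Γ := Γ) x.toList y.toList := by
  have length_eq {x y : FreeMonoid ι}
      (h : PresentedMonoid.mk (ArtinRel Γ) x = PresentedMonoid.mk (ArtinRel Γ) y) :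
      x.toList.length = y.toList.length := by
    simpa only [length_mk] using congrArg length h
  let c : Con (FreeMonoid ι) :=
    { r := fun x y => PresentedMonoid.mk (ArtinRel Γ) x = PresentedMonoid.mk (ArtinRel Γ) y ∧
        (x.toList.length ≤ k + 1 → HeadLinked (Γ := Γ) x.toList y.toList)
      iseqv :=
        { refl := fun x => ⟨rfl, fun _ => .refl _⟩
          symm := fun h => ⟨h.1.symm, fun hy => (h.2 (length_eq h.1 ▸ hy)).symm⟩
          trans := fun h h' => ⟨h.1.trans h'.1, fun hx =>
            have hy := length_eq h.1 ▸ hx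
            .trans hΓ H hy (h.2 hx) (h'.2 hy)⟩ }
      mul' := fun {x x' y y'} h h' => by
        refine ⟨by rw [map_mul, map_mul, h.1, h'.1], fun hxy => ?_⟩
        rw [FreeMonoid.toList_mul, List.length_append] at hxy
        exact (h.2 (by lia)).append (h'.2 (by lia)) h'.1 }
  have le : conGen (ArtinRel Γ) ≤ c := Con.conGen_le.2 fun x y hxy =>
    ⟨PresentedMonoid.mk_eq_mk_of_rel hxy, fun _ => ArtinRel.headLinked hxy⟩
  exact (le (PresentedMonoid.mk_eq_mk_iff.1 h)).2 hx

theorem coincidencesLinkedBelow (hΓ : Γ.CliqueFree 3) (k : ℕ) : CoincidencesLinkedBelow Γ k := by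
  induction k with
  | zero => exact fun i j u v hu => absurd hu (Nat.not_lt_zero _)
  | succ k H =>
    intro i j u v hu h
    obtain ⟨u, rfl⟩ := PresentedMonoid.surjective_mk u
    obtain ⟨v, rfl⟩ := PresentedMonoid.surjective_mk v
    rw [length_mk] at hu
    have h : PresentedMonoid.mk (ArtinRel Γ) (.of i * u) =
        PresentedMonoid.mk (ArtinRel Γ) (.of j * v) := by rwa [map_mul, map_mul]
    exact headLinked_of_mk_eq_mk hΓ H h (Nat.succ_le_succ (Nat.lt_succ_iff.1 hu))

theorem linked_of_gen_mul_eq_gen_mul (hΓ : Γ.CliqueFree 3) {i j : ι} {u v : ArtinMonoid Γ}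
    (h : gen i * u = gen j * v) : Linked i u j v :=
  coincidencesLinkedBelow hΓ (length u + 1) i j u v (Nat.lt_succ_self _) h

theorem isLeftCancelMul (hΓ : Γ.CliqueFree 3) : IsLeftCancelMul (ArtinMonoid Γ) where
  mul_left_cancel x u v h := by
    induction (closure_range_gen.ge trivial : x ∈ Submonoid.closure _) using
      Submonoid.closure_induction_left with
    | one => simpa only [one_mul] using h
    | mul_left _ hi y _ ih =>
      obtain ⟨i, rfl⟩ := hi
      simp only [mul_assoc] at h
      exact ih (linked_self_iff.1 (linked_of_gen_mul_eq_gen_mul hΓ h))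

/-- Reading words backwards. -/
def reverse : ArtinMonoid Γ →* (ArtinMonoid Γ)ᵐᵒᵖ :=
  PresentedMonoid.lift (fun i => MulOpposite.op (gen i)) fun x y h => by
    cases h with
    | braid h =>
      simp only [map_mul, FreeMonoid.lift_eval_of, ← MulOpposite.op_mul, ← mul_assoc,
        gen_mul_gen_mul_gen h]
    | comm h =>
      simp only [map_mul, FreeMonoid.lift_eval_of, ← MulOpposite.op_mul, (commute_gen h).eq]

theorem unop_reverse_unop_reverse (x : ArtinMonoid Γ) :
    (reverse (reverse x).unop).unop = x := by
  induction (closure_range_gen.ge trivial : x ∈ Submonoid.closure _) using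
    Submonoid.closure_induction_left with
  | one => rfl
  | mul_left _ hi y _ ih =>
    obtain ⟨i, rfl⟩ := hi
    rw [map_mul, MulOpposite.unop_mul, map_mul, MulOpposite.unop_mul, ih]
    rfl

theorem isCancelMul (hΓ : Γ.CliqueFree 3) : IsCancelMul (ArtinMonoid Γ) where
  __ := isLeftCancelMul hΓ
  mul_right_cancel x u v h := by
    have := isLeftCancelMul hΓ
    have h := congrArg (fun y => (reverse y).unop) h
    simp only [map_mul, MulOpposite.unop_mul] at h
    rw [← unop_reverse_unop_reverse u, mul_left_cancel h, unop_reverse_unop_reverse]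

theorem isRightLcm_gen (hΓ : Γ.CliqueFree 3) (i j : ι) :
    IsRightLcm (gen i : ArtinMonoid Γ) (gen j) (gen i * complement i j) := by
  intro m
  refine ⟨fun h => ⟨dvd_of_mul_right_dvd h, dvd_of_mul_right_dvd (gen_mul_complement i j ▸ h)⟩, ?_⟩
  rintro ⟨⟨u, rfl⟩, v, hv⟩
  obtain ⟨w, rfl, -⟩ := linked_of_gen_mul_eq_gen_mul hΓ hv
  exact mul_dvd_mul_left _ (dvd_mul_right _ _)

theorem exists_isLeftGcd (hΓ : Γ.CliqueFree 3) (a b : ArtinMonoid Γ) : ∃ d, IsLeftGcd a b d := by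
  have := isLeftCancelMul hΓ
  refine isLength_length.exists_isLeftGcd (isLength_length.exists_isRightLcm
    (A := Set.range gen) ?_ (fun x hx => ?_) ?_) a b
  · rintro ⟨i, hi⟩
    simpa using congrArg length hi
  · obtain rfl | ⟨i, y, rfl⟩ := eq_one_or_exists_gen_mul x
    · exact (hx rfl).elim
    · exact ⟨gen i, ⟨i, rfl⟩, dvd_mul_right _ _⟩
  · rintro _ ⟨i, rfl⟩ _ ⟨j, rfl⟩ - - -
    exact ⟨_, isRightLcm_gen hΓ i j⟩

end ArtinMonoid

end ArtinMonoid

/-! ### Garside elements of lattice-ordered groups -/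

section Garside

variable {G : Type*} [Group G]

/-- A Garside element of a left-ordered group: a positive element, right multiplication by which
is an order automorphism, and whose powers move every element into the positive cone. -/
structure IsGarside [Preorder G] (δ : G) : Prop where
  one_le : 1 ≤ δ
  mul_le_mul_right_iff (x y : G) : x * δ ≤ y * δ ↔ x ≤ y
  exists_one_le_pow_mul (x : G) : ∃ k : ℕ, 1 ≤ δ ^ k * x

/-- `HasInfSup δ x p s` says that `inf x = p` and `sup x = s` in the sense of Garside theory,
so that the canonical length of `x` is `s - p`. -/
structure HasInfSup [Preorder G] (δ x : G) (p s : ℤ) : Prop where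
  inf : IsGreatest {k : ℤ | δ ^ k ≤ x} p
  sup : IsLeast {k : ℤ | x ≤ δ ^ k} s

namespace IsGarside

variable [Preorder G] {δ : G} (hδ : IsGarside δ)
include hδ

theorem mul_zpow_le_mul_zpow_iff {x y : G} (k : ℤ) : x * δ ^ k ≤ y * δ ^ k ↔ x ≤ y := by
  induction k with
  | zero => simp
  | succ k ih => rw [zpow_add_one, ← mul_assoc, ← mul_assoc, hδ.mul_le_mul_right_iff, ih]
  | pred k ih =>
    rw [← hδ.mul_le_mul_right_iff, mul_assoc, mul_assoc, ← zpow_add_one, sub_add_cancel, ih]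

theorem le_mul_zpow_iff {x y : G} (k : ℤ) : x ≤ y * δ ^ k ↔ x * δ ^ (-k) ≤ y := by
  rw [← hδ.mul_zpow_le_mul_zpow_iff (-k), mul_assoc, ← zpow_add, add_neg_cancel, zpow_zero,
    mul_one]

theorem one_le_mul_zpow_neg_iff {x : G} (k : ℤ) : 1 ≤ x * δ ^ (-k) ↔ δ ^ k ≤ x := by
  rw [hδ.le_mul_zpow_iff, neg_neg, one_mul]

theorem not_le_one_of_isGreatest {x : G} {p : ℤ} (hp : IsGreatest {k : ℤ | δ ^ k ≤ x} p) :
    ¬δ ≤ 1 := fun h => by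
  have : p + 1 ≤ p := hp.2 <| by
    rw [Set.mem_ofPred_eq, add_comm, zpow_one_add]
    exact ((hδ.mul_zpow_le_mul_zpow_iff p).2 h).trans (by rw [one_mul]; exact hp.1)
  lia

variable [MulLeftMono G]

theorem zpow_le_zpow {k m : ℤ} (hkm : k ≤ m) : δ ^ k ≤ δ ^ m := by
  obtain ⟨j, rfl⟩ := Int.le.dest hkm
  rw [zpow_add, zpow_natCast]
  exact le_mul_of_one_le_right' (one_le_pow_of_one_le' hδ.one_le j)

theorem le_zpow_iff {x : G} (k : ℤ) : x ≤ δ ^ k ↔ δ ^ (-k) ≤ x⁻¹ := by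
  rw [← hδ.one_le_mul_zpow_neg_iff, neg_neg, le_inv_mul_iff_le]

theorem zpow_add_le_mul {x y : G} {k m : ℤ} (hx : δ ^ k ≤ x) (hy : δ ^ m ≤ y) :
    δ ^ (k + m) ≤ x * y :=
  calc δ ^ (k + m) = δ ^ k * δ ^ m := zpow_add δ k m
    _ ≤ x * δ ^ m := (hδ.mul_zpow_le_mul_zpow_iff m).2 hx
    _ ≤ x * y := mul_le_mul_right hy x

theorem mul_le_zpow_add {x y : G} {k m : ℤ} (hx : x ≤ δ ^ k) (hy : y ≤ δ ^ m) :
    x * y ≤ δ ^ (k + m) :=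
  calc x * y ≤ x * δ ^ m := mul_le_mul_right hy x
    _ ≤ δ ^ k * δ ^ m := (hδ.mul_zpow_le_mul_zpow_iff m).2 hx
    _ = δ ^ (k + m) := (zpow_add δ k m).symm

theorem zpow_mul_le_pow {x : G} {k : ℤ} (hx : δ ^ k ≤ x) (m : ℕ) : δ ^ (k * m) ≤ x ^ m := by
  induction m with
  | zero => simp
  | succ m ih =>
    rw [pow_succ, Nat.cast_succ, mul_add_one]
    exact hδ.zpow_add_le_mul ih hx

theorem inv_mul_le_self {a : G} (ha : 1 ≤ a) : a⁻¹ * δ ≤ δ := by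
  simpa using (hδ.mul_le_mul_right_iff _ _).2 (Left.inv_le_one_iff.2 ha)

theorem list_prod_le_pow {l : List G} (hl : ∀ a ∈ l, a ∈ Set.Icc 1 δ) : l.prod ≤ δ ^ l.length := by
  induction l with
  | nil => simp
  | cons a l ih =>
    rw [List.forall_mem_cons] at hl
    have := hδ.mul_le_zpow_add (k := 1) (m := l.length) (by simpa using hl.1.2)
      (by simpa using ih hl.2)
    rwa [← Nat.cast_one, ← Nat.cast_add, zpow_natCast, add_comm] at this

theorem exists_zpow_neg_le (x : G) : ∃ k : ℕ, δ ^ (-k : ℤ) ≤ x := by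
  obtain ⟨k, hk⟩ := hδ.exists_one_le_pow_mul x
  exact ⟨k, by rwa [zpow_neg, zpow_natCast, ← one_mul x, ← inv_mul_cancel (δ ^ k), mul_assoc,
    le_mul_iff_one_le_right']⟩

theorem exists_le_pow (x : G) : ∃ k : ℕ, x ≤ δ ^ k := by
  obtain ⟨k, hk⟩ := hδ.exists_zpow_neg_le x⁻¹
  exact ⟨k, by rwa [← zpow_natCast, hδ.le_zpow_iff]⟩

theorem zpow_le_zpow_iff (hlt : ¬δ ≤ 1) {k m : ℤ} : δ ^ k ≤ δ ^ m ↔ k ≤ m := by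
  refine ⟨fun h => ?_, hδ.zpow_le_zpow⟩
  by_contra! hmk
  refine hlt ((hδ.mul_zpow_le_mul_zpow_iff m).1 ?_)
  rw [one_mul, ← zpow_one_add]
  exact (hδ.zpow_le_zpow (by lia)).trans h

theorem exists_isGreatest (hlt : ¬δ ≤ 1) (x : G) : ∃ p, IsGreatest {k : ℤ | δ ^ k ≤ x} p := by
  obtain ⟨m, hm⟩ := hδ.exists_le_pow x
  obtain ⟨k, hk⟩ := hδ.exists_zpow_neg_le x
  obtain ⟨p, hp, hmax⟩ := Int.exists_greatest_of_bdd (P := fun k => δ ^ k ≤ x)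
    ⟨m, fun z hz => (hδ.zpow_le_zpow_iff hlt).1 (hz.trans (by rwa [zpow_natCast]))⟩ ⟨_, hk⟩
  exact ⟨p, hp, hmax⟩

theorem isLeast_iff_isGreatest_inv {x : G} {s : ℤ} :
    IsLeast {k : ℤ | x ≤ δ ^ k} s ↔ IsGreatest {k : ℤ | δ ^ k ≤ x⁻¹} (-s) := by
  simp only [IsLeast, IsGreatest, mem_lowerBounds, mem_upperBounds, Set.mem_ofPred_eq,
    hδ.le_zpow_iff]
  exact and_congr_right fun _ => ⟨fun h k hk => by have := h (-k) (by rwa [neg_neg]); lia,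
    fun h k hk => by have := h (-k) hk; lia⟩

theorem exists_hasInfSup (hlt : ¬δ ≤ 1) (x : G) : ∃ p s, HasInfSup δ x p s := by
  obtain ⟨p, hp⟩ := hδ.exists_isGreatest hlt x
  obtain ⟨q, hq⟩ := hδ.exists_isGreatest hlt x⁻¹
  exact ⟨p, -q, hp, hδ.isLeast_iff_isGreatest_inv.2 (by rwa [neg_neg])⟩

end IsGarside

namespace HasInfSup

variable [Preorder G] [MulLeftMono G] {δ x : G} {p s : ℤ}

theorem inv (hδ : IsGarside δ) (hx : HasInfSup δ x p s) : HasInfSup δ x⁻¹ (-s) (-p) :=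
  ⟨hδ.isLeast_iff_isGreatest_inv.1 hx.sup,
    hδ.isLeast_iff_isGreatest_inv.2 (by rw [inv_inv, neg_neg]; exact hx.inf)⟩

theorem inf_le_sup (hδ : IsGarside δ) (hx : HasInfSup δ x p s) : p ≤ s :=
  (hδ.zpow_le_zpow_iff (hδ.not_le_one_of_isGreatest hx.inf)).1 (hx.inf.1.trans hx.sup.1)

end HasInfSup

section Lattice

variable [SemilatticeInf G] {δ : G}

theorem IsGarside.inf_mul_zpow (hδ : IsGarside δ) (x y : G) (k : ℤ) :
    (x ⊓ y) * δ ^ k = x * δ ^ k ⊓ y * δ ^ k :=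
  OrderIso.map_inf
    { toEquiv := Equiv.mulRight (δ ^ k), map_rel_iff' := hδ.mul_zpow_le_mul_zpow_iff k } x y

variable [MulLeftMono G]

theorem mul_inf_of_mulLeftMono (a b c : G) : a * (b ⊓ c) = a * b ⊓ a * c :=
  (OrderIso.mulLeft a).map_inf b c

namespace IsGarside

variable (hδ : IsGarside δ)
include hδ

theorem le_inf_mul_pow {x : G} {k : ℕ} (hx : x ≤ δ ^ (k + 1)) : x ≤ (x ⊓ δ) * δ ^ k := by
  rw [← zpow_natCast δ k, hδ.inf_mul_zpow, zpow_natCast, ← pow_succ']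
  exact le_inf (le_mul_of_one_le_right' (one_le_pow_of_one_le' hδ.one_le k)) hx

theorem eq_one_of_inf_eq_one {x : G} (hx : 1 ≤ x) (h : x ⊓ δ = 1) : x = 1 := by
  obtain ⟨k, hk⟩ := hδ.exists_le_pow x
  induction k with
  | zero => exact le_antisymm (by simpa using hk) hx
  | succ k ih => exact ih (by simpa [h] using hδ.le_inf_mul_pow hk)

end IsGarside

/-- A word in divisors of `δ` each of whose letters `a` is the largest divisor of `δ` below the
remaining product: no nontrivial prefix of the next letter `b` can be transferred to `a`. -/
structure IsGreedyWord (δ : G) (l : List G) : Prop where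
  mem_Icc : ∀ a ∈ l, a ∈ Set.Icc 1 δ
  isChain : l.IsChain fun a b => b ⊓ a⁻¹ * δ = 1

namespace IsGreedyWord

variable (hδ : IsGarside δ)
include hδ

theorem prod_inf {a : G} {l : List G} (hl : IsGreedyWord δ (a :: l)) : (a :: l).prod ⊓ δ = a := by
  induction l generalizing a with
  | nil => simpa using (hl.mem_Icc a (by simp)).2
  | cons b l ih =>
    obtain ⟨hab, hbl⟩ := List.isChain_cons_cons.1 hl.isChain
    have ha : 1 ≤ a := (hl.mem_Icc a (by simp)).1
    have hinf := ih ⟨fun c hc => hl.mem_Icc c (List.mem_cons_of_mem _ hc), hbl⟩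
    calc (a :: b :: l).prod ⊓ δ = a * ((b :: l).prod ⊓ a⁻¹ * δ) := by
          rw [mul_inf_of_mulLeftMono, mul_inv_cancel_left, List.prod_cons]
      _ = a * (((b :: l).prod ⊓ δ) ⊓ a⁻¹ * δ) := by
          rw [inf_assoc, inf_eq_right.2 (hδ.inv_mul_le_self ha)]
      _ = a := by rw [hinf, hab, mul_one]

theorem inv_prod_mul_pow_inf {b : G} {l : List G} (hl : IsGreedyWord δ (l ++ [b])) :
    (l ++ [b]).prod⁻¹ * δ ^ (l.length + 1) ⊓ δ = b⁻¹ * δ := by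
  induction l using List.reverseRecOn generalizing b with
  | nil =>
    simpa using hδ.inv_mul_le_self (hl.mem_Icc b (by simp)).1
  | append_singleton l a ih =>
    obtain ⟨hla, -, hab⟩ := List.isChain_append.1 hl.isChain
    have hinf := ih ⟨fun c hc => hl.mem_Icc c (List.mem_append_left _ hc), hla⟩
    replace hab : b ⊓ a⁻¹ * δ = 1 := hab a (by simp) b (by simp)
    have hb : b ≤ δ := (hl.mem_Icc b (by simp)).2
    set y := (l ++ [a]).prod⁻¹ * δ ^ (l.length + 1)
    calc (l ++ [a] ++ [b]).prod⁻¹ * δ ^ ((l ++ [a]).length + 1) ⊓ δ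
        = b⁻¹ * (y * δ ^ (1 : ℤ) ⊓ b * δ ^ (1 : ℤ)) := by
          simp only [mul_inf_of_mulLeftMono, y, zpow_one, List.prod_append (l₁ := l ++ [a]),
            List.prod_singleton, mul_inv_rev, List.length_append, List.length_singleton,
            pow_succ, mul_assoc, inv_mul_cancel_left]
      _ = b⁻¹ * (b ⊓ (y ⊓ δ)) * δ := by
          rw [← hδ.inf_mul_zpow, zpow_one, inf_comm y δ, ← inf_assoc, inf_eq_left.2 hb, inf_comm b,
            mul_assoc]
      _ = b⁻¹ * δ := by rw [hinf, hab, mul_one]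

theorem isLeast_sup {l : List G} (hl : IsGreedyWord δ l) (hlast : l.getLast? ≠ some 1)
    (hlt : ¬δ ≤ 1) (p : ℤ) : IsLeast {k : ℤ | δ ^ p * l.prod ≤ δ ^ k} (p + l.length) := by
  refine ⟨?_, fun k hk => ?_⟩
  · rw [Set.mem_ofPred_eq, zpow_add, zpow_natCast]
    exact mul_le_mul_right (hδ.list_prod_le_pow hl.mem_Icc) _
  rw [Set.mem_ofPred_eq] at hk
  obtain rfl | ⟨l, b, rfl⟩ := l.eq_nil_or_concat'
  · simpa [hδ.zpow_le_zpow_iff hlt] using hk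
  · rw [List.length_append, List.length_singleton]
    by_contra! hlt
    have hprod : (l ++ [b]).prod ≤ δ ^ l.length := by
      rw [← mul_le_mul_iff_left (δ ^ p), ← zpow_natCast, ← zpow_add]
      exact hk.trans (hδ.zpow_le_zpow (by lia))
    have hδle : δ ≤ (l ++ [b]).prod⁻¹ * δ ^ (l.length + 1) := by
      rw [le_inv_mul_iff_mul_le, pow_succ]
      simpa using (hδ.mul_zpow_le_mul_zpow_iff 1).2 hprod
    have hb := hl.inv_prod_mul_pow_inf hδ
    rw [inf_eq_right.2 hδle, right_eq_mul, inv_eq_one] at hb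
    exact hlast (by simp [hb])

theorem exists_prod_eq {x : G} {k : ℕ} (hx : 1 ≤ x) (hxk : x ≤ δ ^ k) :
    ∃ l, IsGreedyWord δ l ∧ l.prod = x ∧ l.getLast? ≠ some 1 := by
  induction k generalizing x with
  | zero => exact ⟨[], ⟨by simp, .nil⟩, le_antisymm hx (by simpa using hxk), by simp⟩
  | succ k ih =>
    have ha : 1 ≤ x ⊓ δ := le_inf hx hδ.one_le
    obtain ⟨l, hl, hprod, hlast⟩ := ih (le_inv_mul_iff_le.2 (inf_le_left (a := x) (b := δ)))
      (inv_mul_le_iff_le_mul.2 (hδ.le_inf_mul_pow hxk))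
    rw [eq_inv_mul_iff_mul_eq] at hprod
    rcases l with - | ⟨b, l⟩
    · rw [List.prod_nil, mul_one] at hprod
      by_cases hx1 : x = 1
      · exact ⟨[], ⟨by simp, .nil⟩, hx1.symm, by simp⟩
      · exact ⟨[x], ⟨by simpa using ⟨hx, hprod ▸ inf_le_right⟩, .singleton _⟩, by simp, by simpa⟩
    · refine ⟨(x ⊓ δ) :: b :: l, ⟨?_, List.isChain_cons_cons.2 ⟨?_, hl.isChain⟩⟩, hprod, by
        simpa using hlast⟩
      · exact List.forall_mem_cons.2 ⟨⟨ha, inf_le_right⟩, hl.mem_Icc⟩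
      · rw [← hl.prod_inf hδ, inf_assoc, inf_eq_right.2 (hδ.inv_mul_le_self ha),
          ← mul_right_inj (x ⊓ δ), mul_inf_of_mulLeftMono, hprod, mul_inv_cancel_left, mul_one]

end IsGreedyWord

end Lattice

/-! ### Sliding towards rigid elements -/

section Sliding

variable [SemilatticeInf G] {δ : G}

/-- For `inf x = p` and `sup x = s` this is the preferred prefix of `x`: `x * δ ^ (-p) ⊓ δ` is the
first factor of `x` moved across `δ ^ p`, and `x⁻¹ * δ ^ s ⊓ δ` is what the last factor of `x`
lacks to become `δ`. -/
def slidingPrefix (δ x : G) (p s : ℤ) : G := x * δ ^ (-p) ⊓ x⁻¹ * δ ^ s ⊓ δ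

/-- The rigid elements with infimum `p` and supremum `s`: those with trivial sliding prefix. -/
structure IsRigidWith (δ y : G) (p s : ℤ) : Prop extends HasInfSup δ y p s where
  slidingPrefix_eq_one : slidingPrefix δ y p s = 1

theorem slidingPrefix_inv (δ x : G) (p s : ℤ) :
    slidingPrefix δ x⁻¹ (-s) (-p) = slidingPrefix δ x p s := by
  rw [slidingPrefix, slidingPrefix, neg_neg, inv_inv, inf_comm (x⁻¹ * _)]

theorem slidingPrefix_zpow (hδ : IsGarside δ) (p : ℤ) : slidingPrefix δ (δ ^ p) p p = 1 := by
  rw [slidingPrefix, ← zpow_add, ← zpow_neg, ← zpow_add, add_neg_cancel, neg_add_cancel, zpow_zero,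
    inf_idem, inf_eq_left.2 hδ.one_le]

variable [MulLeftMono G]

theorem one_le_slidingPrefix (hδ : IsGarside δ) {x : G} {p s : ℤ} (hp : δ ^ p ≤ x)
    (hs : x ≤ δ ^ s) : 1 ≤ slidingPrefix δ x p s :=
  le_inf (le_inf ((hδ.one_le_mul_zpow_neg_iff p).2 hp) (le_inv_mul_iff_le.2 hs)) hδ.one_le

theorem IsGreedyWord.slidingPrefix_eq (hδ : IsGarside δ) {l : List G} (hl : IsGreedyWord δ l)
    {a b : G} (ha : l.head? = some a) (hb : l.getLast? = some b) (p : ℤ) :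
    slidingPrefix δ (δ ^ p * l.prod) p (p + l.length) = δ ^ p * a * (δ ^ p)⁻¹ ⊓ b⁻¹ * δ := by
  have hhead : δ ^ p * l.prod * δ ^ (-p) ⊓ δ = δ ^ p * a * (δ ^ p)⁻¹ := by
    obtain ⟨l, rfl⟩ := List.head?_eq_some_iff.1 ha
    conv_rhs => rw [← hl.prod_inf hδ, mul_inf_of_mulLeftMono, ← zpow_neg, hδ.inf_mul_zpow]
    rw [← zpow_add_one, ← zpow_add, add_neg_cancel_comm, zpow_one]
  have hlast : (δ ^ p * l.prod)⁻¹ * δ ^ (p + l.length) ⊓ δ = b⁻¹ * δ := by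
    obtain ⟨l, rfl⟩ := List.getLast?_eq_some_iff.1 hb
    rw [← hl.inv_prod_mul_pow_inf hδ, zpow_add, List.length_append, List.length_singleton]
    group
  rw [slidingPrefix, ← hhead, ← hlast, inf_inf_inf_comm, inf_idem]

namespace IsRigidWith

variable (hδ : IsGarside δ) {y : G} {p s : ℤ} (hy : IsRigidWith δ y p s)
include hδ hy

theorem inv : IsRigidWith δ y⁻¹ (-s) (-p) :=
  ⟨hy.toHasInfSup.inv hδ, by rw [slidingPrefix_inv, hy.slidingPrefix_eq_one]⟩

theorem inf_eq_one : y * δ ^ (-p) ⊓ y⁻¹ * δ ^ s = 1 :=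
  hδ.eq_one_of_inf_eq_one (le_inf ((hδ.one_le_mul_zpow_neg_iff p).2 hy.inf.1)
    (le_inv_mul_iff_le.2 hy.sup.1)) hy.slidingPrefix_eq_one

theorem pow_succ_mul_inf_le (m : ℕ) :
    y ^ (m + 1) * δ ^ (-(p * ↑(m + 1))) ⊓ δ ^ (s - p) ≤ y * δ ^ (-p) := by
  induction m with
  | zero => simp
  | succ m ih =>
    set a := y ^ (m + 1) * δ ^ (-(p * ↑(m + 1))) with ha
    have hle : y⁻¹ * δ ^ s ≤ δ ^ (s - p) := by
      rw [sub_eq_neg_add, zpow_add, hδ.mul_zpow_le_mul_zpow_iff, hδ.le_zpow_iff, neg_neg, inv_inv]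
      exact hy.inf.1
    calc y ^ (m + 1 + 1) * δ ^ (-(p * ↑(m + 1 + 1))) ⊓ δ ^ (s - p)
        = y * (a ⊓ y⁻¹ * δ ^ s) * δ ^ (-p) := by
          rw [mul_inf_of_mulLeftMono, hδ.inf_mul_zpow, mul_inv_cancel_left, ← zpow_add,
            ← sub_eq_add_neg, ha, pow_succ' y (m + 1), mul_assoc, mul_assoc, mul_assoc, ← zpow_add]
          push_cast
          ring_nf
      _ ≤ y * 1 * δ ^ (-p) := by
          refine (hδ.mul_zpow_le_mul_zpow_iff _).2 (mul_le_mul_right ?_ y)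
          rw [← hy.inf_eq_one hδ]
          exact le_inf ((inf_le_inf_left a hle).trans ih) inf_le_right
      _ = y * δ ^ (-p) := by rw [mul_one]

theorem not_zpow_le_pow (m : ℕ) : ¬δ ^ (p * m + 1) ≤ y ^ m := fun h => by
  have hlt := hδ.not_le_one_of_isGreatest hy.inf
  rcases m with - | m
  · simp [hlt] at h
  rcases (hy.inf_le_sup hδ).eq_or_lt with rfl | hps
  · rw [le_antisymm hy.sup.1 hy.inf.1, ← zpow_natCast, ← zpow_mul, hδ.zpow_le_zpow_iff hlt] at h
    lia
  · have hδy : δ ≤ y * δ ^ (-p) := by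
      refine le_trans (le_inf ?_ ?_) (hy.pow_succ_mul_inf_le hδ m)
      · rwa [hδ.le_mul_zpow_iff, neg_neg, ← zpow_one_add, add_comm]
      · simpa using hδ.zpow_le_zpow (k := 1) (m := s - p) (by lia)
    rw [hδ.le_mul_zpow_iff, neg_neg, ← zpow_one_add] at hδy
    have : 1 + p ≤ p := hy.inf.2 hδy
    lia

/-- The powers of `g * y * g⁻¹` differ from those of `y` by bounded factors, so that a larger
infimum of `g * y * g⁻¹` would show up in a high power of `y`. -/
theorem le_inf_of_conj {g : G} {q : ℤ} (h : δ ^ q ≤ g * y * g⁻¹) : q ≤ p := by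
  by_contra! hpq
  obtain ⟨c, hc⟩ := hδ.exists_zpow_neg_le g⁻¹
  obtain ⟨d, hd⟩ := hδ.exists_zpow_neg_le g
  refine hy.not_zpow_le_pow hδ (c + d + 1) (le_trans (hδ.zpow_le_zpow ?_)
    (hδ.zpow_add_le_mul (hδ.zpow_add_le_mul hc (hδ.zpow_mul_le_pow h (c + d + 1))) hd) |>.trans_eq
    ?_)
  · push_cast
    nlinarith
  · rw [conj_pow]
    group

theorem sup_le_of_conj {g : G} {q : ℤ} (h : g * y * g⁻¹ ≤ δ ^ q) : s ≤ q := by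
  have := (hy.inv hδ).le_inf_of_conj hδ (g := g) (q := -q) (by
    rw [hδ.le_zpow_iff] at h
    simpa [mul_assoc] using h)
  lia

theorem hasInfSup_of_conj {x g : G} (hp : δ ^ p ≤ x) (hs : x ≤ δ ^ s) (hg : g⁻¹ * x * g = y) :
    HasInfSup δ x p s := by
  obtain rfl : x = g * y * g⁻¹ := by rw [← hg]; group
  exact ⟨⟨hp, fun _ => hy.le_inf_of_conj hδ⟩, ⟨hs, fun _ => hy.sup_le_of_conj hδ⟩⟩

theorem slidingPrefix_le {x g : G} (hg1 : 1 ≤ g) (hg : g⁻¹ * x * g = y) :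
    slidingPrefix δ x p s ≤ g := by
  have hle (k : ℤ) : δ ^ k ≤ g * δ ^ k := by
    simpa using (hδ.mul_zpow_le_mul_zpow_iff k).2 hg1
  rw [← inv_mul_le_one_iff, ← hy.inf_eq_one hδ]
  refine le_inf (inv_mul_le_iff_le_mul.2 ?_) (inv_mul_le_iff_le_mul.2 ?_)
  · calc slidingPrefix δ x p s ≤ x * δ ^ (-p) := inf_le_left.trans inf_le_left
      _ ≤ x * (g * δ ^ (-p)) := mul_le_mul_right (hle (-p)) x
      _ = g * (y * δ ^ (-p)) := by rw [← hg]; group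
  · calc slidingPrefix δ x p s ≤ x⁻¹ * δ ^ s := inf_le_left.trans inf_le_right
      _ ≤ x⁻¹ * (g * δ ^ s) := mul_le_mul_right (hle s) x⁻¹
      _ = g * (y⁻¹ * δ ^ s) := by rw [← hg]; group

end IsRigidWith

theorem zpow_le_conj_slidingPrefix (hδ : IsGarside δ) {x : G} {p s : ℤ} (hp : δ ^ p ≤ x)
    (hs : x ≤ δ ^ s) : δ ^ p ≤ (slidingPrefix δ x p s)⁻¹ * x * slidingPrefix δ x p s := by
  rw [mul_assoc, le_inv_mul_iff_mul_le]
  calc slidingPrefix δ x p s * δ ^ p ≤ x := by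
        rw [← neg_neg p, ← hδ.le_mul_zpow_iff, neg_neg]
        exact inf_le_left.trans inf_le_left
    _ ≤ x * slidingPrefix δ x p s := le_mul_of_one_le_right' (one_le_slidingPrefix hδ hp hs)

theorem conj_slidingPrefix_le_zpow (hδ : IsGarside δ) {x : G} {p s : ℤ} (hp : δ ^ p ≤ x)
    (hs : x ≤ δ ^ s) : (slidingPrefix δ x p s)⁻¹ * x * slidingPrefix δ x p s ≤ δ ^ s := by
  have := zpow_le_conj_slidingPrefix hδ ((hδ.le_zpow_iff s).1 hs)
    ((hδ.le_zpow_iff (-p)).2 (by simpa using hp))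
  rw [slidingPrefix_inv] at this
  rw [hδ.le_zpow_iff]
  simpa [mul_assoc] using this

end Sliding

end Garside

/-! ### The braid monoid and the braid group -/

section BraidMonoid

open ArtinMonoid

/-- The monoid of positive braids on `n` strands, given by generators and relations. -/
abbrev BraidMonoid (n : ℕ) := ArtinMonoid (SimpleGraph.pathGraph (n - 1))

theorem cliqueFree_pathGraph (n : ℕ) : (SimpleGraph.pathGraph n).CliqueFree 3 :=
  (SimpleGraph.pathGraph.bicoloring n).colorable.cliqueFree (by simp)

/-- The Artin generators of the braid monoid, with out-of-range indices mapped to `1`. -/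
def genOrOne (n i : ℕ) : BraidMonoid n := if h : i < n - 1 then gen ⟨i, h⟩ else 1

/-- The half-twist of the braid monoid. -/
def monoidΔ (n : ℕ) : BraidMonoid n := halfTwist (genOrOne n) (n - 1)

variable {n : ℕ}

@[simp] theorem genOrOne_val (i : Fin (n - 1)) : genOrOne n i = gen i := dif_pos i.2

theorem braidRelations_genOrOne (n : ℕ) : BraidRelations (genOrOne n) (n - 1) where
  braid i hi := by
    rw [genOrOne, genOrOne, dif_pos hi, dif_pos (by lia)]
    exact gen_mul_gen_mul_gen (SimpleGraph.pathGraph_adj.2 (.inl rfl))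
  commute i j hij hj := by
    rw [genOrOne, genOrOne, dif_pos hj, dif_pos (by lia)]
    exact commute_gen (by rw [SimpleGraph.pathGraph_adj]; lia)

theorem semiconjBy_monoidΔ (i : Fin (n - 1)) : SemiconjBy (monoidΔ n) (gen i) (gen i.rev) := by
  have h := (braidRelations_genOrOne n).semiconjBy_halfTwist i.2 le_rfl
  rwa [genOrOne_val, show n - 1 - 1 - i = i.rev by rw [Fin.val_rev]; lia, genOrOne_val] at h

theorem semiconjBy_monoidΔ_pow (k : ℕ) (i : Fin (n - 1)) :
    SemiconjBy (monoidΔ n ^ k) (gen i) (gen (Fin.rev^[k] i)) := by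
  induction k generalizing i with
  | zero => simp
  | succ k ih => rw [pow_succ]; exact (ih i.rev).mul_left (semiconjBy_monoidΔ i)

theorem exists_monoidΔ_eq_mul_gen (i : Fin (n - 1)) : ∃ z, monoidΔ n = z * gen i := by
  have := isLeftCancelMul (cliqueFree_pathGraph (n - 1))
  simpa [monoidΔ] using (braidRelations_genOrOne n).exists_halfTwist_eq_mul i.2 le_rfl

theorem exists_mul_eq_monoidΔ_pow (x : BraidMonoid n) : ∃ z k, z * x = monoidΔ n ^ k := by
  induction (closure_range_gen.ge trivial : x ∈ Submonoid.closure _) using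
    Submonoid.closure_induction_right with
  | one => exact ⟨1, 0, by simp⟩
  | mul_right x _ _ hi ih =>
    obtain ⟨i, rfl⟩ := hi
    obtain ⟨z, k, hz⟩ := ih
    obtain ⟨y, hy⟩ := exists_monoidΔ_eq_mul_gen (Fin.rev^[k] i)
    refine ⟨y * z, k + 1, ?_⟩
    rw [mul_assoc, ← mul_assoc z, hz, (semiconjBy_monoidΔ_pow k i).eq, ← mul_assoc, ← hy, pow_succ']

theorem exists_mul_eq_mul (x y : BraidMonoid n) : ∃ a b, a * x = b * y := by
  obtain ⟨a, k, ha⟩ := exists_mul_eq_monoidΔ_pow x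
  obtain ⟨b, m, hb⟩ := exists_mul_eq_monoidΔ_pow y
  exact ⟨monoidΔ n ^ m * a, monoidΔ n ^ k * b, by rw [mul_assoc, mul_assoc, ha, hb, pow_mul_comm]⟩

theorem σ_mul_σ_mul_σ {i j : Fin (n - 1)} (h : (i : ℕ) + 1 = j) :
    (σ i * σ j * σ i : Braid n) = σ j * σ i * σ j :=
  mul_inv_eq_one.1 (PresentedGroup.one_of_mem (rels := braidRels n) (.inl ⟨i, j, h, rfl⟩))

theorem commute_σ {i j : Fin (n - 1)} (h : (i : ℕ) + 2 ≤ j) : Commute (σ i : Braid n) (σ j) :=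
  mul_inv_eq_one.1 (PresentedGroup.one_of_mem (rels := braidRels n) (.inr ⟨i, j, h, rfl⟩))

/-- The canonical homomorphism from the braid monoid to the braid group. -/
def toBraid (n : ℕ) : BraidMonoid n →* Braid n :=
  PresentedMonoid.lift (fun i => σ i) fun a b h => by
    cases h with
    | braid h =>
      simp only [map_mul, FreeMonoid.lift_eval_of]
      obtain h | h := SimpleGraph.pathGraph_adj.1 h
      exacts [σ_mul_σ_mul_σ h, (σ_mul_σ_mul_σ h).symm]
    | @comm i j h =>
      simp only [map_mul, FreeMonoid.lift_eval_of]
      rw [SimpleGraph.pathGraph_adj] at h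
      obtain h | h | h : (i : ℕ) = j ∨ (i : ℕ) + 2 ≤ j ∨ (j : ℕ) + 2 ≤ i := by lia
      exacts [Fin.ext h ▸ rfl, commute_σ h, (commute_σ h).symm]

@[simp] theorem toBraid_gen (i : Fin (n - 1)) : toBraid n (gen i) = σ i := rfl

theorem toBraid_injective (n : ℕ) : Function.Injective (toBraid n) := by
  have := isCancelMul (cliqueFree_pathGraph (n - 1))
  obtain ⟨G, _, f, hf⟩ := exists_injective_hom_group (BraidMonoid n) exists_mul_eq_mul
  have hrels : ∀ r ∈ braidRels n, FreeGroup.lift (fun i => f (gen i)) r = 1 := by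
    rintro r (⟨i, j, h, rfl⟩ | ⟨i, j, h, rfl⟩) <;>
      simp only [map_mul, map_inv, FreeGroup.lift_apply_of, mul_inv_eq_one]
    all_goals simp only [← map_mul]
    · exact congrArg f (gen_mul_gen_mul_gen (SimpleGraph.pathGraph_adj.2 (.inl h)))
    · exact congrArg f (commute_gen (by rw [SimpleGraph.pathGraph_adj]; lia)).eq
  have hcomp : (PresentedGroup.toGroup hrels).comp (toBraid n) = f :=
    MonoidHom.eq_of_eqOn_denseM closure_range_gen <| by
      rintro _ ⟨i, rfl⟩
      exact PresentedGroup.toGroup.of hrels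
  exact Function.Injective.of_comp (f := PresentedGroup.toGroup hrels)
    (by rw [← MonoidHom.coe_comp, hcomp]; exact hf)

theorem mrange_toBraid (n : ℕ) : MonoidHom.mrange (toBraid n) = Pos n := by
  rw [MonoidHom.mrange_eq_map, ← closure_range_gen, MonoidHom.map_mclosure, ← Set.range_comp, Pos]
  rfl

theorem toBraid_monoidΔ (n : ℕ) : toBraid n (monoidΔ n) = Δ n := by
  rw [monoidΔ, map_halfTwist, halfTwist_eq_prod, Δ]
  congr
  ext i
  simp only [Function.comp_apply, genOrOne, σ']
  split_ifs
  exacts [rfl, map_one _]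

theorem σ_mem_Pos (i : Fin (n - 1)) : (σ i : Braid n) ∈ Pos n :=
  Submonoid.subset_closure ⟨i, rfl⟩

theorem Δ_mem_Pos (n : ℕ) : Δ n ∈ Pos n := by
  rw [← mrange_toBraid, ← toBraid_monoidΔ]
  exact ⟨_, rfl⟩

theorem semiconjBy_Δ_pow (k : ℕ) (i : Fin (n - 1)) :
    SemiconjBy (Δ n ^ k) (σ i) (σ (Fin.rev^[k] i)) := by
  simpa [toBraid_monoidΔ] using (semiconjBy_monoidΔ_pow k i).map (toBraid n)

theorem Δ_mul_inv_σ_mem_Pos (i : Fin (n - 1)) : Δ n * (σ i)⁻¹ ∈ Pos n := by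
  obtain ⟨z, hz⟩ := exists_monoidΔ_eq_mul_gen i
  rw [← toBraid_monoidΔ, hz, map_mul, toBraid_gen, mul_inv_cancel_right, ← mrange_toBraid]
  exact ⟨z, rfl⟩

theorem map_conj_Δ_Pos (n : ℕ) : (Pos n).map (MulAut.conj (Δ n)).toMonoidHom = Pos n := by
  have hσ (i : Fin (n - 1)) : MulAut.conj (Δ n) (σ i) = σ i.rev := by
    have := (semiconjBy_Δ_pow 1 i).eq
    rw [MulAut.conj_apply, mul_inv_eq_iff_eq_mul]
    simpa using this
  rw [Pos, MonoidHom.map_mclosure, ← Set.range_comp]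
  change Submonoid.closure (Set.range fun i => MulAut.conj (Δ n) (σ i)) = _
  simp only [hσ]
  rw [← Fin.rev_surjective.range_comp σ]
  rfl

theorem exists_Δ_pow_mul_mem_Pos (x : Braid n) : ∃ k : ℕ, Δ n ^ k * x ∈ Pos n := by
  induction ((PresentedGroup.closure_range_of (braidRels n)).ge trivial :
    x ∈ Subgroup.closure _) using Subgroup.closure_induction_left with
  | one => exact ⟨0, by simp⟩
  | mul_left _ hi y _ ih =>
    obtain ⟨i, rfl⟩ := hi
    obtain ⟨k, hk⟩ := ih
    refine ⟨k, ?_⟩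
    rw [← mul_assoc, show PresentedGroup.of i = σ i from rfl, (semiconjBy_Δ_pow k i).eq, mul_assoc]
    exact mul_mem (σ_mem_Pos _) hk
  | inv_mul_cancel _ hi y _ ih =>
    obtain ⟨i, rfl⟩ := hi
    obtain ⟨k, hk⟩ := ih
    refine ⟨k + 1, ?_⟩
    rw [pow_succ', mul_assoc, ← mul_assoc (_ ^ k), show PresentedGroup.of i = σ i from rfl,
      (semiconjBy_Δ_pow k i).inv_right.eq, mul_assoc, ← mul_assoc]
    exact mul_mem (Δ_mul_inv_σ_mem_Pos _) hk

end BraidMonoid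

/-! ### The prefix order and the exponent sum -/

section Order

variable {n : ℕ}

/-- The exponent sum of a braid, as a homomorphism. -/
def exponentSumHom (n : ℕ) : Braid n →* Multiplicative ℤ :=
  PresentedGroup.toGroup (f := fun _ => Multiplicative.ofAdd 1) (by
    rintro r (⟨i, j, -, rfl⟩ | ⟨i, j, -, rfl⟩) <;> simp)

/-- The exponent sum of a braid. -/
def exponentSum (x : Braid n) : ℤ := (exponentSumHom n x).toAdd

@[simp] theorem exponentSum_mul (x y : Braid n) :
    exponentSum (x * y) = exponentSum x + exponentSum y := by
  rw [exponentSum, map_mul, toAdd_mul]; rfl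

@[simp] theorem exponentSum_inv (x : Braid n) : exponentSum x⁻¹ = -exponentSum x := by
  rw [exponentSum, map_inv, toAdd_inv]; rfl

theorem exponentSum_toBraid (x : BraidMonoid n) : exponentSum (toBraid n x) = x.length := by
  induction (ArtinMonoid.closure_range_gen.ge trivial : x ∈ Submonoid.closure _) using
    Submonoid.closure_induction_left with
  | one => simp [exponentSum]
  | mul_left _ hi y _ ih =>
    obtain ⟨i, rfl⟩ := hi
    have hσ : exponentSum (σ i : Braid n) = 1 := congrArg Multiplicative.toAdd
      (PresentedGroup.toGroup.of _)
    rw [map_mul, exponentSum_mul, ih, toBraid_gen, hσ, ArtinMonoid.length_mul,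
      ArtinMonoid.length_gen, Nat.cast_add, Nat.cast_one]

theorem exponentSum_Δ (n : ℕ) : exponentSum (Δ n) = (n * (n - 1) / 2 : ℕ) := by
  have hlength : ArtinMonoid.lengthHom (monoidΔ n) =
      Multiplicative.ofAdd 1 ^ ∑ i ∈ Finset.range (n - 1 + 1), i := by
    rw [monoidΔ, map_halfTwist]
    refine halfTwist_eq_pow fun i hi => ?_
    rw [Function.comp_apply, genOrOne, dif_pos hi]
    rfl
  rw [← toBraid_monoidΔ, exponentSum_toBraid, ArtinMonoid.length, hlength, Finset.sum_range_id,
    toAdd_pow, toAdd_ofAdd, smul_eq_mul, mul_one]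
  rcases n with - | n <;> rfl

theorem exponentSum_nonneg {x : Braid n} (hx : x ∈ Pos n) : 0 ≤ exponentSum x := by
  obtain ⟨m, rfl⟩ := (mrange_toBraid n).ge hx
  exact exponentSum_toBraid m ▸ Nat.cast_nonneg _

theorem exponentSum_pos {x : Braid n} (hx : x ∈ Pos n) (hne : x ≠ 1) : 0 < exponentSum x := by
  obtain ⟨m, rfl⟩ := (mrange_toBraid n).ge hx
  rw [exponentSum_toBraid, Nat.cast_pos, Nat.pos_iff_ne_zero]
  exact fun h => hne (by rw [ArtinMonoid.isLength_length.eq_one_of_eq_zero m h, map_one])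

theorem exists_meet (x y : Braid n) : ∃ m : Braid n, ∀ w : Braid n,
    PrefixLE w m ↔ PrefixLE w x ∧ PrefixLE w y := by
  have := ArtinMonoid.isLeftCancelMul (cliqueFree_pathGraph (n - 1))
  obtain ⟨m, hm⟩ := exists_meet_of_isLeftGcd (toBraid_injective n)
    (ArtinMonoid.exists_isLeftGcd (cliqueFree_pathGraph (n - 1)))
    (fun x => by
      obtain ⟨k, hk⟩ := exists_Δ_pow_mul_mem_Pos x
      obtain ⟨a, ha⟩ := (mrange_toBraid n).ge hk
      exact ⟨monoidΔ n ^ k, a, by rw [ha, map_pow, toBraid_monoidΔ]⟩) x y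
  rw [mrange_toBraid] at hm
  exact ⟨m, hm⟩

theorem exponentSum_le_exponentSum {x y : Braid n} (h : PrefixLE x y) :
    exponentSum x ≤ exponentSum y := by
  have := exponentSum_nonneg h
  rw [exponentSum_mul, exponentSum_inv] at this
  lia

noncomputable instance : SemilatticeInf (Braid n) where
  le := PrefixLE
  le_refl x := by simp [PrefixLE]
  le_trans x y z hxy hyz := by
    simpa [mul_assoc, PrefixLE] using mul_mem hxy hyz
  le_antisymm x y hxy hyx := by
    by_contra! hne
    have := exponentSum_pos hxy (by rwa [ne_eq, inv_mul_eq_one])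
    have := exponentSum_le_exponentSum hyx
    rw [exponentSum_mul, exponentSum_inv] at *
    lia
  inf x y := (exists_meet x y).choose
  inf_le_left x y := (((exists_meet x y).choose_spec _).1 (by simp [PrefixLE])).1
  inf_le_right x y := (((exists_meet x y).choose_spec _).1 (by simp [PrefixLE])).2
  le_inf x y z hxy hxz := ((exists_meet y z).choose_spec x).2 ⟨hxy, hxz⟩

theorem prefixLE_iff_le {x y : Braid n} : PrefixLE x y ↔ x ≤ y := Iff.rfl

theorem mem_Pos_iff_one_le {x : Braid n} : x ∈ Pos n ↔ 1 ≤ x := by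
  rw [← prefixLE_iff_le, PrefixLE, inv_one, one_mul]

instance : MulLeftMono (Braid n) where
  elim a x y hxy := by
    change PrefixLE _ _ at hxy ⊢
    simpa [PrefixLE, mul_assoc] using hxy

theorem isGarside_Δ (n : ℕ) : IsGarside (Δ n) where
  one_le := mem_Pos_iff_one_le.1 (Δ_mem_Pos n)
  mul_le_mul_right_iff x y := by
    rw [← prefixLE_iff_le, ← prefixLE_iff_le, PrefixLE, PrefixLE]
    conv_rhs => rw [← map_conj_Δ_Pos]
    rw [Submonoid.mem_map_equiv, MulAut.conj_symm_apply]
    simp only [mul_inv_rev, mul_assoc]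
  exists_one_le_pow_mul x := by
    simpa only [mem_Pos_iff_one_le] using exists_Δ_pow_mul_mem_Pos x

theorem isSimple_iff_mem_Icc {s : Braid n} : IsSimple s ↔ s ∈ Set.Icc 1 (Δ n) := by
  rw [IsSimple, mem_Pos_iff_one_le, prefixLE_iff_le, Set.mem_Icc]

theorem isSimple_σ (i : Fin (n - 1)) : IsSimple (σ i : Braid n) := by
  have h : (Δ n)⁻¹ ≤ (σ i)⁻¹ := by
    rw [← prefixLE_iff_le, PrefixLE, inv_inv]
    exact Δ_mul_inv_σ_mem_Pos i
  refine ⟨σ_mem_Pos i, ?_⟩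
  rw [prefixLE_iff_le, ← le_inv_mul_iff_le]
  simpa using ((isGarside_Δ n).mul_le_mul_right_iff _ _).2 h

theorem exists_simpleOrInv_word (x : Braid n) :
    ∃ l : List (Braid n), (∀ a ∈ l, SimpleOrInv a) ∧ l.prod = x := by
  have hx : x ∈ Submonoid.closure (Set.range (σ (n := n)) ∪ (Set.range σ)⁻¹) := by
    rw [← Subgroup.closure_toSubmonoid]
    exact (PresentedGroup.closure_range_of (braidRels n)).ge (Subgroup.mem_top x)
  obtain ⟨l, hl, rfl⟩ := Submonoid.exists_list_of_mem_closure hx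
  refine ⟨l, fun a ha => (hl a ha).imp ?_ ?_, rfl⟩ <;>
  · rintro ⟨i, hi⟩
    exact hi ▸ isSimple_σ i

theorem exponentSum_le_of_simpleOrInv {a : Braid n} (ha : SimpleOrInv a) :
    exponentSum a ≤ exponentSum (Δ n) := by
  obtain ha | ha := ha
  · exact exponentSum_le_exponentSum ha.2
  · have := exponentSum_nonneg ha.1
    have := exponentSum_nonneg (Δ_mem_Pos n)
    rw [exponentSum_inv] at *
    lia

theorem exponentSum_le_mul_len (x : Braid n) :
    exponentSum x ≤ (n * (n - 1) / 2 * len x : ℕ) := by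
  obtain ⟨l, hl, hx, hlen⟩ : len x ∈ {k | ∃ l : List (Braid n), (∀ a ∈ l, SimpleOrInv a) ∧
      l.prod = x ∧ l.length = k} := by
    obtain ⟨l, hl, hx⟩ := exists_simpleOrInv_word x
    exact Nat.sInf_mem ⟨_, l, hl, hx, rfl⟩
  rw [← hlen, ← hx, mul_comm, Nat.cast_mul, ← exponentSum_Δ]
  clear hx hlen
  induction l with
  | nil => simp [exponentSum]
  | cons a l ih =>
    rw [List.forall_mem_cons] at hl
    rw [List.prod_cons, exponentSum_mul, List.length_cons, Nat.cast_succ, add_one_mul, add_comm]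
    exact add_le_add (ih hl.2) (exponentSum_le_of_simpleOrInv hl.1)

end Order

/-! ### Normal forms and cyclic sliding of braids -/

section Sliding

variable {n : ℕ} {x t : Braid n} {p s : ℤ} {l : List (Braid n)}

theorem isSimple_mul_iff {a b : Braid n} (ha : 1 ≤ a) (hb : 1 ≤ b) :
    IsSimple (a * b) ↔ b ≤ a⁻¹ * Δ n := by
  rw [isSimple_iff_mem_Icc, Set.mem_Icc, and_iff_right (ha.trans (le_mul_of_one_le_right' hb)),
    le_inv_mul_iff_mul_le]

theorem leftWeighted_iff {a b : Braid n} (ha : IsSimple a) (hb : IsSimple b) :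
    LeftWeighted a b ↔ b ⊓ a⁻¹ * Δ n = 1 := by
  rw [isSimple_iff_mem_Icc] at ha hb
  simp only [LeftWeighted, mem_Pos_iff_one_le, prefixLE_iff_le]
  refine ⟨fun h => by_contra fun hne => ?_, fun h t ht htb hne hsimple => hne ?_⟩
  · have hinf : 1 ≤ b ⊓ a⁻¹ * Δ n := le_inf hb.1 (le_inv_mul_iff_le.2 ha.2)
    exact h _ hinf inf_le_left hne ((isSimple_mul_iff ha.1 hinf).2 inf_le_right)
  · exact le_antisymm ((le_inf htb ((isSimple_mul_iff ha.1 ht).1 hsimple)).trans_eq h) ht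

theorem infIs_iff_isGreatest : InfIs x p ↔ IsGreatest {k : ℤ | Δ n ^ k ≤ x} p := by
  rw [InfIs, prefixLE_iff_le, prefixLE_iff_le]
  refine and_congr_right fun _ => ⟨fun h k hk => ?_, fun h hlt => (h hlt).not_gt (lt_add_one p)⟩
  by_contra! hlt
  exact h (((isGarside_Δ n).zpow_le_zpow hlt).trans hk)

theorem isNormalForm_iff : IsNormalForm x p l ↔ x = Δ n ^ p * l.prod ∧
    IsGreatest {k : ℤ | Δ n ^ k ≤ x} p ∧ IsGreedyWord (Δ n) l ∧ l.getLast? ≠ some 1 := by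
  rw [IsNormalForm, infIs_iff_isGreatest]
  refine and_congr_right fun _ => and_congr_right fun _ => ?_
  have hchain (hl : ∀ a ∈ l, IsSimple a) :
      l.IsChain LeftWeighted ↔ l.IsChain fun a b => b ⊓ a⁻¹ * Δ n = 1 :=
    List.IsChain.iff_of_mem_imp fun a b ha hb => leftWeighted_iff (hl a ha) (hl b hb)
  constructor
  · rintro ⟨hl, hlast, h⟩
    exact ⟨⟨fun a ha => isSimple_iff_mem_Icc.1 (hl a ha), (hchain hl).1 h⟩, hlast⟩
  · rintro ⟨h, hlast⟩
    have hl (a) (ha : a ∈ l) : IsSimple a := isSimple_iff_mem_Icc.2 (h.mem_Icc a ha)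
    exact ⟨hl, hlast, (hchain hl).2 h.isChain⟩

theorem IsNormalForm.hasInfSup (h : IsNormalForm x p l) :
    HasInfSup (Δ n) x p (p + l.length) := by
  obtain ⟨rfl, hp, hl, hlast⟩ := isNormalForm_iff.1 h
  have hδ := isGarside_Δ n
  exact ⟨hp, hl.isLeast_sup hδ hlast (hδ.not_le_one_of_isGreatest hp) p⟩

theorem exists_isNormalForm (h : HasInfSup (Δ n) x p s) : ∃ l, IsNormalForm x p l := by
  have hx : 1 ≤ Δ n ^ (-p) * x := by rw [zpow_neg, le_inv_mul_iff_le]; exact h.inf.1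
  have hx' : Δ n ^ (-p) * x ≤ Δ n ^ (s - p).toNat := by
    rw [← zpow_natCast, Int.toNat_of_nonneg (sub_nonneg.2 (h.inf_le_sup (isGarside_Δ n))),
      sub_eq_neg_add, zpow_add]
    exact mul_le_mul_right h.sup.1 _
  obtain ⟨l, hl, hprod, hlast⟩ := IsGreedyWord.exists_prod_eq (isGarside_Δ n) hx hx'
  exact ⟨l, isNormalForm_iff.2 ⟨by rw [hprod, ← mul_assoc, ← zpow_add]; simp, h.inf, hl, hlast⟩⟩

theorem IsNormalForm.length_eq (h : IsNormalForm x p l) {q : ℤ} (hx : HasInfSup (Δ n) x q s) :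
    (l.length : ℤ) = s - q := by
  have := h.hasInfSup.inf.unique hx.inf
  have := h.hasInfSup.sup.unique hx.sup
  lia

theorem clen_eq (h : HasInfSup (Δ n) x p s) : (clen x : ℤ) = s - p := by
  obtain ⟨q, l, hl, hlen⟩ : clen x ∈ {r | ∃ p l, IsNormalForm x p l ∧ l.length = r} :=
    Nat.sInf_mem (let ⟨l, hl⟩ := exists_isNormalForm h; ⟨_, p, l, hl, rfl⟩)
  rw [← hlen, hl.length_eq h]

theorem IsNormalForm.mem_Icc_slidingPrefix_iff (h : IsNormalForm x p l) {a b : Braid n}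
    (ha : l.head? = some a) (hb : l.getLast? = some b) :
    t ∈ Set.Icc 1 (slidingPrefix (Δ n) x p (p + l.length)) ↔
      t ∈ Pos n ∧ PrefixLE t (Δ n ^ p * a * (Δ n ^ p)⁻¹) ∧ IsSimple (b * t) := by
  obtain ⟨hx, -, hl, -⟩ := isNormalForm_iff.1 h
  have hb1 : 1 ≤ b := (hl.mem_Icc b (List.mem_of_getLast? hb)).1
  rw [Set.mem_Icc, congrArg (slidingPrefix _ · _ _) hx, hl.slidingPrefix_eq (isGarside_Δ n) ha hb,
    le_inf_iff, mem_Pos_iff_one_le, prefixLE_iff_le]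
  exact and_congr_right fun ht => and_congr_right fun _ => (isSimple_mul_iff hb1 ht).symm

theorem isPreferredPrefix_iff (h : HasInfSup (Δ n) x p s) :
    IsPreferredPrefix x t ↔ t = slidingPrefix (Δ n) x p s := by
  have hone := one_le_slidingPrefix (isGarside_Δ n) h.inf.1 h.sup.1
  have heq {q l} (hl : IsNormalForm x q l) : q = p ∧ q + l.length = s :=
    ⟨hl.hasInfSup.inf.unique h.inf, hl.hasInfSup.sup.unique h.sup⟩
  have hnil {q} (hl : IsNormalForm x q []) : slidingPrefix (Δ n) x p s = 1 := by
    obtain ⟨rfl, rfl⟩ := heq hl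
    obtain rfl : x = Δ n ^ q := by simpa using hl.1
    rw [List.length_nil, Nat.cast_zero, add_zero, slidingPrefix_zpow (isGarside_Δ n)]
  constructor
  · rintro ⟨q, l, hl, ⟨rfl, rfl⟩ | ⟨a, b, ha, hb, ht, hta, hbt, hmax⟩⟩
    · exact (hnil hl).symm
    obtain ⟨rfl, rfl⟩ := heq hl
    have hiff (u) := hl.mem_Icc_slidingPrefix_iff (t := u) ha hb
    obtain ⟨hpos, hle, hsimple⟩ := (hiff _).1 ⟨hone, le_rfl⟩
    exact le_antisymm ((hiff t).2 ⟨ht, hta, hbt⟩).2 (hmax _ hpos hle hsimple)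
  · rintro rfl
    obtain ⟨l, hl⟩ := exists_isNormalForm h
    obtain ⟨-, rfl⟩ := heq hl
    refine ⟨p, l, hl, ?_⟩
    rcases eq_or_ne l [] with rfl | hne
    · exact .inl ⟨rfl, hnil hl⟩
    have hiff (u) := hl.mem_Icc_slidingPrefix_iff (t := u) (List.head?_eq_some_head hne)
      (List.getLast?_eq_some_getLast hne)
    obtain ⟨hpos, hle, hsimple⟩ := (hiff _).1 ⟨hone, le_rfl⟩
    exact .inr ⟨_, _, List.head?_eq_some_head hne, List.getLast?_eq_some_getLast hne, hpos, hle,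
      hsimple, fun u hu hua hbu => ((hiff u).2 ⟨hu, hua, hbu⟩).2⟩

theorem rigid_iff (h : HasInfSup (Δ n) x p s) : Rigid x ↔ slidingPrefix (Δ n) x p s = 1 := by
  rw [Rigid, isPreferredPrefix_iff h, eq_comm]

theorem Rigid.exists_isRigidWith (h : Rigid x) : ∃ p s, IsRigidWith (Δ n) x p s := by
  have ⟨p, l, hl, _⟩ := h
  exact ⟨p, _, hl.hasInfSup, (rigid_iff hl.hasInfSup).1 h⟩

theorem slide_eq (h : HasInfSup (Δ n) x p s) :
    slide x = (slidingPrefix (Δ n) x p s)⁻¹ * x * slidingPrefix (Δ n) x p s := by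
  have hex : ∃ t, IsPreferredPrefix x t := ⟨_, (isPreferredPrefix_iff h).2 rfl⟩
  rw [slide, dif_pos hex, (isPreferredPrefix_iff h).1 hex.choose_spec]

theorem exists_iterate_slide_rigid {y g : Braid n} (hy : IsRigidWith (Δ n) y p s) (hg : 1 ≤ g)
    (hgy : g⁻¹ * x * g = y) (hp : Δ n ^ p ≤ x) (hs : x ≤ Δ n ^ s) :
    ∃ k : ℕ, k ≤ exponentSum g ∧ Rigid (slide^[k] x) := by
  have hδ := isGarside_Δ n
  obtain ⟨m, hm⟩ := Int.eq_ofNat_of_zero_le (exponentSum_nonneg (mem_Pos_iff_one_le.2 hg))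
  induction m using Nat.strong_induction_on generalizing x g with
  | _ m ih =>
  have hx := hy.hasInfSup_of_conj hδ hp hs hgy
  by_cases hrigid : Rigid x
  · exact ⟨0, by simp [hm], hrigid⟩
  have ht : 1 ≤ slidingPrefix (Δ n) x p s := one_le_slidingPrefix hδ hp hs
  have htg : slidingPrefix (Δ n) x p s ≤ g := hy.slidingPrefix_le hδ hg hgy
  have hne : slidingPrefix (Δ n) x p s ≠ 1 := mt (rigid_iff hx).2 hrigid
  have hp' := zpow_le_conj_slidingPrefix hδ hp hs
  have hs' := conj_slidingPrefix_le_zpow hδ hp hs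
  rw [← slide_eq hx] at hp' hs'
  have hgy' : ((slidingPrefix (Δ n) x p s)⁻¹ * g)⁻¹ * slide x *
      ((slidingPrefix (Δ n) x p s)⁻¹ * g) = y := by
    rw [slide_eq hx, ← hgy]
    group
  generalize slidingPrefix (Δ n) x p s = t at ht htg hne hgy'
  have hpos := exponentSum_pos (mem_Pos_iff_one_le.2 ht) hne
  have hnonneg := exponentSum_le_exponentSum htg
  have hsum : exponentSum (t⁻¹ * g) = exponentSum g - exponentSum t := by
    rw [exponentSum_mul, exponentSum_inv, neg_add_eq_sub]
  obtain ⟨k, hk, hrig⟩ := ih (exponentSum (t⁻¹ * g)).toNat (by lia)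
    (le_inv_mul_iff_le.2 htg) hgy' hp' hs' (by lia)
  exact ⟨k + 1, by push_cast; lia, hrig⟩

end Sliding

/-- **Theorem (after Gebhardt–González-Meneses).** Let `x ∈ B_n` be a super summit element
which is not rigid but is conjugate to a rigid braid.  If `g` is any positive braid such
that `g⁻¹ x g` is rigid, then some iterate `𝔰^k(x)` with `1 ≤ k ≤ (n(n-1)/2)·|g|` is
rigid. -/
theorem iterated_sliding_reaches_rigid (n : ℕ) (x : Braid n)
    (hx : InSSS x x) (hnotrigid : ¬Rigid x)
    (hconj : ∃ z : Braid n, IsConj x z ∧ Rigid z)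
    (g : Braid n) (hg : g ∈ Pos n) (hrigid : Rigid (g⁻¹ * x * g)) :
    ∃ k : ℕ, 1 ≤ k ∧ k ≤ (n * (n - 1) / 2) * len g ∧ Rigid (slide^[k] x) := by
  have hδ := isGarside_Δ n
  obtain ⟨p, s, hy⟩ := hrigid.exists_isRigidWith
  obtain ⟨q, r, hxqr⟩ := hδ.exists_hasInfSup (hδ.not_le_one_of_isGreatest hy.inf) x
  have hconj_eq : g * (g⁻¹ * x * g) * g⁻¹ = x := by group
  have hq : q ≤ p := hy.le_inf_of_conj hδ (hconj_eq.symm ▸ hxqr.inf.1)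
  have hr : s ≤ r := hy.sup_le_of_conj hδ (hconj_eq.symm ▸ hxqr.sup.1)
  have hclen : clen x ≤ clen (g⁻¹ * x * g) := hx.2 _ (isConj_iff.2 ⟨g⁻¹, by rw [inv_inv]⟩)
  have hxlen := clen_eq hxqr
  have hylen := clen_eq hy.toHasInfSup
  obtain ⟨rfl, rfl⟩ : q = p ∧ r = s := by lia
  obtain ⟨k, hk, hrig⟩ :=
    exists_iterate_slide_rigid hy (mem_Pos_iff_one_le.1 hg) rfl hxqr.inf.1 hxqr.sup.1
  refine ⟨k, Nat.one_le_iff_ne_zero.2 ?_, ?_, hrig⟩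
  · rintro rfl
    exact hnotrigid hrig
  · exact_mod_cast hk.trans (exponentSum_le_mul_len g)

end Braids
end
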